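/- arXiv:1606.04592 — 11 statements merged into one kernel-verified Lean document; each statement's English description precedes it below -/
import Mathlib

section
/- Let f be a monic squarefree polynomial of degree n ≥ 1 over the finite field F_q, and let d_1, …, d_m be the degrees of its distinct monic irreducible factors. The q-th power Frobenius map σ : F_q[x]/(f) → F_q[x]/(f), σ(a) = a^q, is an F_q-linear endomorphism of F_q[x]/(f), and its minimal polynomial (as an F_q-linear endomorphism) equals lcm(λ^{d_1} − 1, λ^{d_2} − 1, …, λ^{d_m} − 1) in F_q[λ]. -/
/-! The residue maps `AdjoinRoot f → AdjoinRoot g`, for `g` running over the irreducible factors of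
`f`, are surjective, jointly injective (the factors are pairwise coprime) and commute with the
`q`-th power map. Hence a polynomial `p` kills the Frobenius of `AdjoinRoot f` if and only if it
kills the Frobenius of each field `AdjoinRoot g`. The latter has minimal polynomial
`X ^ deg g - 1` (linear independence of characters, `FiniteField.minpoly_frobeniusAlgHom`), so the
annihilating polynomials of `σ` are the common multiples of the `X ^ deg g - 1`; the minimal
polynomial and the lcm divide each other and are both normalized. -/

open Polynomial

/-- Applying a polynomial in an endomorphism commutes with a linear map intertwining two
endomorphisms. -/
lemma map_aeval_of_intertwines {K V W : Type*} [Field K] [AddCommGroup V] [Module K V]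
    [AddCommGroup W] [Module K W] (π : V →ₗ[K] W) (s : Module.End K V) (t : Module.End K W)
    (h : ∀ v, π (s v) = t (π v)) (p : K[X]) (v : V) :
    π (aeval s p v) = aeval t p (π v) := by
  have hpow : ∀ (n : ℕ) (v : V), π ((s ^ n) v) = (t ^ n) (π v) := by
    intro n
    induction n with
    | zero => intro v; simp
    | succ n ih => intro v; rw [pow_succ, pow_succ, Module.End.mul_apply, ih, h,
        Module.End.mul_apply]
  induction p using Polynomial.induction_on' with
  | add p q hp hq => simp [hp, hq]
  | monomial n a => simp [aeval_monomial, hpow]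

/-- For irreducible `g` of degree `d`, the polynomials annihilating the Frobenius of the field
`AdjoinRoot g` are the multiples of `X ^ d - 1`. -/
lemma aeval_frobenius_adjoinRoot_eq_zero_iff {K : Type*} [Field K] [Fintype K] {g : K[X]}
    (hg : Irreducible g) (p : K[X]) :
    aeval (FiniteField.frobeniusAlgHom K (AdjoinRoot g)).toLinearMap p = 0 ↔
      X ^ g.natDegree - 1 ∣ p := by
  have : Fact (Irreducible g) := ⟨hg⟩
  have : Module.Finite K (AdjoinRoot g) := (AdjoinRoot.powerBasis hg.ne_zero).finite
  have : Finite (AdjoinRoot g) := Module.finite_of_finite K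
  have hd : Module.finrank K (AdjoinRoot g) = g.natDegree := by
    rw [(AdjoinRoot.powerBasis hg.ne_zero).finrank, AdjoinRoot.powerBasis_dim]
  rw [← minpoly.dvd_iff, FiniteField.minpoly_frobeniusAlgHom, hd]

lemma algHomOfDvd_mk {K : Type*} [Field K] {f g : K[X]} (hgf : g ∣ f) (h : K[X]) :
    AdjoinRoot.algHomOfDvd K f g hgf (AdjoinRoot.mk f h) = AdjoinRoot.mk g h := by
  rw [← AdjoinRoot.aeval_eq, ← Polynomial.aeval_algHom_apply, AdjoinRoot.algHomOfDvd_root,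
    AdjoinRoot.aeval_eq]

/-- For a monic squarefree `f ∈ F_q[x]` of degree `n ≥ 1` whose distinct monic irreducible
factors are the elements of the finset `S`, the minimal polynomial of the `q`-th power
Frobenius `F_q`-linear endomorphism `σ` of `F_q[x]/(f)` equals
`lcm_{g ∈ S} (λ^{deg g} − 1)`. -/
theorem frobenius_minpoly_eq_lcm
    (Fq : Type*) [Field Fq] [Fintype Fq] [DecidableEq Fq]
    (f : Polynomial Fq) (S : Finset (Polynomial Fq))
    (hmonic : ∀ g ∈ S, g.Monic) (hirr : ∀ g ∈ S, Irreducible g)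
    (hf : f = ∏ g ∈ S, g) (hn : 1 ≤ f.natDegree)
    (σ : Module.End Fq (AdjoinRoot f))
    (hσ : ∀ a : AdjoinRoot f, σ a = a ^ Fintype.card Fq) :
    minpoly Fq σ = S.lcm (fun g => X ^ g.natDegree - 1) := by
  have hdvd : ∀ g ∈ S, g ∣ f := fun g hg => hf ▸ Finset.dvd_prod_of_mem _ hg
  have hcop : (S : Set Fq[X]).Pairwise (Function.onFun IsCoprime fun g => g) := by
    intro g hg h hh hne
    refine ((hirr g hg).coprime_iff_not_dvd).2 fun hd => hne ?_
    exact eq_of_monic_of_associated (hmonic g hg) (hmonic h hh)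
      ((hirr g hg).associated_of_dvd (hirr h hh) hd)
  have key : ∀ p : Fq[X], aeval σ p = 0 ↔ ∀ g ∈ S, X ^ g.natDegree - 1 ∣ p := by
    intro p
    have hcomm : ∀ g (hg : g ∈ S) (a : AdjoinRoot f),
        AdjoinRoot.algHomOfDvd Fq f g (hdvd g hg) (aeval σ p a) =
          aeval (FiniteField.frobeniusAlgHom Fq (AdjoinRoot g)).toLinearMap p
            (AdjoinRoot.algHomOfDvd Fq f g (hdvd g hg) a) := fun g hg a =>
      map_aeval_of_intertwines (AdjoinRoot.algHomOfDvd Fq f g (hdvd g hg)).toLinearMap σ _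
        (fun v => by simp [hσ]) p a
    constructor
    · intro hp g hg
      rw [← aeval_frobenius_adjoinRoot_eq_zero_iff (hirr g hg)]
      refine LinearMap.ext fun b => ?_
      obtain ⟨h, rfl⟩ := AdjoinRoot.mk_surjective b
      have := hcomm g hg (AdjoinRoot.mk f h)
      rw [hp] at this
      simpa [algHomOfDvd_mk] using this.symm
    · intro hp
      -- A value of `p(σ)` is divisible by every `g ∈ S`, hence by their product `f`.
      refine LinearMap.ext fun a => ?_
      obtain ⟨h, hh⟩ := AdjoinRoot.mk_surjective (aeval σ p a)
      rw [LinearMap.zero_apply, ← hh, AdjoinRoot.mk_eq_zero, hf]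
      refine Finset.prod_dvd_of_coprime hcop fun g hg => ?_
      have := hcomm g hg a
      rw [(aeval_frobenius_adjoinRoot_eq_zero_iff (hirr g hg) p).2 (hp g hg), ← hh] at this
      rwa [algHomOfDvd_mk, LinearMap.zero_apply, AdjoinRoot.mk_eq_zero] at this
  have hf0 : f ≠ 0 := by rintro rfl; simp at hn
  have : Module.Finite Fq (AdjoinRoot f) := (AdjoinRoot.powerBasis hf0).finite
  refine dvd_antisymm_of_normalize_eq
    (minpoly.monic (Algebra.IsIntegral.isIntegral σ)).normalize_eq_self Finset.normalize_lcm ?_ ?_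
  · exact minpoly.dvd _ _ ((key _).2 fun g hg => Finset.dvd_lcm hg)
  · exact Finset.lcm_dvd ((key _).1 (minpoly.aeval _ _))
end

section
/- Let f be a monic squarefree polynomial of degree n ≥ 1 over the finite field F_q, and let d_1, …, d_m be the degrees of its distinct monic irreducible factors. The characteristic polynomial of the F_q-linear endomorphism σ : F_q[x]/(f) → F_q[x]/(f), σ(a) = a^q, equals the product (λ^{d_1} − 1)(λ^{d_2} − 1)⋯(λ^{d_m} − 1) in F_q[λ]. -/
/-!
Both sides are multiplicative over coprime factors. By the Chinese remainder theorem
`F_q[x]/(gh) ≃ F_q[x]/(g) × F_q[x]/(h)` as `F_q`-algebras when `g` and `h` are coprime, and any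
algebra isomorphism commutes with the `q`-th power map, so the characteristic polynomial of `σ` is
the product of those on the two factors (`charpoly_frob_mul`). This reduces the claim to
irreducible `g` of degree `d`. There `F_q[x]/(g)` is a field of degree `d` over `F_q`, and the
Frobenius automorphism has minimal polynomial `X ^ d - 1` because its powers `1, σ, …, σ ^ (d - 1)`
are distinct automorphisms, hence linearly independent. The minimal polynomial has full degree `d`
and so equals the characteristic polynomial.
-/

open Polynomial

namespace FrobeniusCharpoly

/-- The `q`-th power map of a commutative `F_q`-algebra, as an `F_q`-linear endomorphism. -/
noncomputable def frob (K : Type*) [Field K] [Fintype K] (A : Type*) [CommRing A] [Algebra K A] :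
    Module.End K A :=
  (FiniteField.frobeniusAlgHom K A).toLinearMap

lemma frob_apply {K : Type*} [Field K] [Fintype K]
    {A : Type*} [CommRing A] [Algebra K A] (a : A) :
    frob K A a = a ^ Fintype.card K := rfl

/-- In a finite field extension the minimal polynomial of Frobenius has degree equal to the
dimension, so it is the characteristic polynomial. -/
lemma charpoly_frob_field {K : Type*} [Field K] [Fintype K]
    (L : Type*) [Field L] [Algebra K L] [Module.Finite K L] :
    (frob K L).charpoly = X ^ Module.finrank K L - 1 := by
  have : Finite L := Module.finite_of_finite K
  have hmin : minpoly K (frob K L) = X ^ Module.finrank K L - 1 :=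
    FiniteField.minpoly_frobeniusAlgHom K L
  have hdvd := LinearMap.minpoly_dvd_charpoly (frob K L)
  rw [hmin] at hdvd
  have hdeg : (X ^ Module.finrank K L - 1 : K[X]).natDegree = Module.finrank K L :=
    natDegree_X_pow_sub_C (r := (1 : K))
  refine eq_of_monic_of_dvd_of_natDegree_le
    (monic_X_pow_sub_C (1 : K) Module.finrank_pos.ne') (LinearMap.charpoly_monic _) hdvd ?_
  rw [hdeg, LinearMap.charpoly_natDegree]

lemma finrank_adjoinRoot {K : Type*} [Field K] (g : K[X]) :
    Module.finrank K (AdjoinRoot g) = g.natDegree :=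
  finrank_quotient_span_eq_natDegree

lemma algHomOfDvd_mk {K : Type*} [Field K] (f g : K[X]) (hgf : g ∣ f) (p : K[X]) :
    AdjoinRoot.algHomOfDvd K f g hgf (AdjoinRoot.mk f p) = AdjoinRoot.mk g p := by
  rw [← AdjoinRoot.aeval_eq, ← AdjoinRoot.aeval_eq, ← aeval_algHom_apply,
    AdjoinRoot.algHomOfDvd_root]

lemma charpoly_frob_mul {K : Type*} [Field K] [Fintype K]
    {g h : K[X]} (hg : g.Monic) (hh : h.Monic) (hgh : IsCoprime g h)
    [Module.Finite K (AdjoinRoot g)] [Module.Finite K (AdjoinRoot h)]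
    [Module.Finite K (AdjoinRoot (g * h))] :
    (frob K (AdjoinRoot (g * h))).charpoly =
      (frob K (AdjoinRoot g)).charpoly * (frob K (AdjoinRoot h)).charpoly := by
  let φ : AdjoinRoot (g * h) →ₐ[K] AdjoinRoot g × AdjoinRoot h :=
    (AdjoinRoot.algHomOfDvd K (g * h) g (dvd_mul_right g h)).prod
      (AdjoinRoot.algHomOfDvd K (g * h) h (dvd_mul_left h g))
  have hinj : Function.Injective φ := by
    rw [injective_iff_map_eq_zero]
    intro a ha
    obtain ⟨p, rfl⟩ := AdjoinRoot.mk_surjective a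
    have h1 := congrArg Prod.fst ha
    have h2 := congrArg Prod.snd ha
    replace h1 : AdjoinRoot.mk g p = 0 :=
      (algHomOfDvd_mk _ _ _ p).symm.trans h1
    replace h2 : AdjoinRoot.mk h p = 0 :=
      (algHomOfDvd_mk _ _ _ p).symm.trans h2
    rw [AdjoinRoot.mk_eq_zero] at h1 h2 ⊢
    exact hgh.mul_dvd h1 h2
  -- Both sides have dimension `deg g + deg h`, so injectivity of `φ` already gives the CRT.
  have hrank : Module.finrank K (AdjoinRoot (g * h)) =
      Module.finrank K (AdjoinRoot g × AdjoinRoot h) := by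
    rw [Module.finrank_prod, finrank_adjoinRoot, finrank_adjoinRoot, finrank_adjoinRoot,
      hg.natDegree_mul hh]
  let e : AdjoinRoot (g * h) ≃ₗ[K] AdjoinRoot g × AdjoinRoot h :=
    LinearEquiv.ofBijective φ.toLinearMap
      ⟨hinj, (LinearMap.injective_iff_surjective_of_finrank_eq_finrank hrank).1 hinj⟩
  have he : e.conj (frob K (AdjoinRoot (g * h))) =
      (frob K (AdjoinRoot g)).prodMap (frob K (AdjoinRoot h)) := by
    refine LinearMap.ext fun y => ?_
    obtain ⟨x, rfl⟩ := e.surjective y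
    rw [LinearEquiv.conj_apply_apply, LinearEquiv.symm_apply_apply, frob_apply]
    exact map_pow φ x _
  rw [← LinearEquiv.charpoly_conj e, he, LinearMap.charpoly_prodMap]

lemma charpoly_frob_prod {K : Type*} [Field K] [Fintype K]
    (S : Finset K[X]) (hmonic : ∀ g ∈ S, g.Monic)
    (hirr : ∀ g ∈ S, Irreducible g) (f : K[X]) (hf : f = ∏ g ∈ S, g)
    [Module.Finite K (AdjoinRoot f)] :
    (frob K (AdjoinRoot f)).charpoly = ∏ g ∈ S, (X ^ g.natDegree - 1 : K[X]) := by
  classical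
  induction S using Finset.induction_on generalizing f with
  | empty =>
    refine (LinearMap.charpoly_monic _).natDegree_eq_zero.1 ?_
    rw [LinearMap.charpoly_natDegree, finrank_adjoinRoot, hf, Finset.prod_empty, natDegree_one]
  | insert g S hgS ih =>
    have hg := hmonic g (Finset.mem_insert_self g S)
    have hgi := hirr g (Finset.mem_insert_self g S)
    have hmS : ∀ k ∈ S, k.Monic := fun k hk => hmonic k (Finset.mem_insert_of_mem hk)
    have hiS : ∀ k ∈ S, Irreducible k := fun k hk => hirr k (Finset.mem_insert_of_mem hk)
    have hcop : IsCoprime g (∏ k ∈ S, k) := by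
      refine IsCoprime.prod_right fun k hk => ?_
      refine (hgi.coprime_iff_not_dvd).2 fun hdvd => hgS ?_
      rwa [eq_of_monic_of_associated hg (hmS k hk) (hgi.associated_of_dvd (hiS k hk) hdvd)]
    have := hg.finite_adjoinRoot
    have hS : (∏ k ∈ S, k).Monic := monic_prod_of_monic S (fun k => k) hmS
    have := hS.finite_adjoinRoot
    have hfield : (frob K (AdjoinRoot g)).charpoly = X ^ g.natDegree - 1 := by
      have : Fact (Irreducible g) := ⟨hgi⟩
      rw [← finrank_adjoinRoot]
      exact charpoly_frob_field (AdjoinRoot g)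
    rw [Finset.prod_insert hgS] at hf
    subst hf
    rw [Finset.prod_insert hgS, ← hfield, ← ih hmS hiS _ rfl]
    exact charpoly_frob_mul hg hS hcop

end FrobeniusCharpoly

/-- For a monic squarefree `f ∈ F_q[x]` of degree `n ≥ 1` whose distinct monic irreducible
factors are the elements of the finset `S`, the characteristic polynomial of the `q`-th power
Frobenius `F_q`-linear endomorphism `σ` of `F_q[x]/(f)` equals
`∏_{g ∈ S} (λ^{deg g} − 1)`. -/
theorem frobenius_charpoly_eq_prod
    (Fq : Type*) [Field Fq] [Fintype Fq]
    (f : Polynomial Fq) (S : Finset (Polynomial Fq))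
    (hmonic : ∀ g ∈ S, g.Monic) (hirr : ∀ g ∈ S, Irreducible g)
    (hf : f = ∏ g ∈ S, g) (hn : 1 ≤ f.natDegree)
    [Module.Finite Fq (AdjoinRoot f)]
    (σ : Module.End Fq (AdjoinRoot f))
    (hσ : ∀ a : AdjoinRoot f, σ a = a ^ Fintype.card Fq) :
    LinearMap.charpoly σ = ∏ g ∈ S, (X ^ g.natDegree - 1) := by
  obtain rfl : σ = FrobeniusCharpoly.frob Fq _ := LinearMap.ext hσ
  exact FrobeniusCharpoly.charpoly_frob_prod S hmonic hirr f hf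
end

section
/- Let f be a monic squarefree polynomial of degree n over the finite field F_q having at least two distinct monic irreducible factors. Then the minimal polynomial of the F_q-linear Frobenius endomorphism σ : F_q[x]/(f) → F_q[x]/(f), σ(a) = a^q, has degree strictly less than n. -/
/-!
On each residue field `F_q[x]/(g)`, which has `q ^ deg g` elements, the Frobenius satisfies
`λ ^ deg g - 1`. A polynomial divisible by `λ ^ deg g - 1` for every `g ∈ S` therefore annihilates
`σ` modulo every `g`, hence modulo their product `f`. The product of all the `λ ^ deg g - 1` has
degree `n` and contains the factor `λ - 1` at least twice, since there are at least two factors;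
one copy can be removed while keeping a common multiple, which leaves an annihilating polynomial of
degree `n - 1`.
-/

open Polynomial

/-- The residue field of `g` has `q ^ deg g` elements, so `p ↦ p ^ (q ^ deg g)` is the identity
modulo `g`. -/
lemma irreducible_dvd_pow_card_pow_sub {Fq : Type*} [Field Fq] [Fintype Fq]
    {g : Polynomial Fq} (hg : Irreducible g) (p : Polynomial Fq) :
    g ∣ p ^ (Fintype.card Fq ^ g.natDegree) - p := by
  have : Fact (Irreducible g) := ⟨hg⟩
  have : Module.Finite Fq (AdjoinRoot g) := (AdjoinRoot.powerBasis hg.ne_zero).finite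
  have : Finite (AdjoinRoot g) := Module.finite_of_finite Fq
  have hcard : Nat.card (AdjoinRoot g) = Fintype.card Fq ^ g.natDegree := by
    rw [Module.natCard_eq_pow_finrank (K := Fq), (AdjoinRoot.powerBasis hg.ne_zero).finrank,
      AdjoinRoot.powerBasis_dim, Nat.card_eq_fintype_card]
  have := Fintype.ofFinite (AdjoinRoot g)
  rw [← AdjoinRoot.mk_eq_zero, map_sub, map_pow, ← hcard, Nat.card_eq_fintype_card,
    FiniteField.pow_card, sub_self]

lemma end_pow_apply_of_apply_eq_pow {K A : Type*} [CommSemiring K] [Semiring A] [Algebra K A]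
    {σ : Module.End K A} {q : ℕ} (hσ : ∀ a, σ a = a ^ q) (d : ℕ) (a : A) :
    (σ ^ d) a = a ^ (q ^ d) := by
  induction d with
  | zero => simp
  | succ d ih => rw [pow_succ', Module.End.mul_apply, ih, hσ, ← pow_mul, pow_succ]

/-- A common multiple of the `λ ^ deg g - 1`, `g ∈ S`, annihilates the Frobenius: its values vanish
modulo each of the pairwise coprime `g`. -/
lemma aeval_frobenius_eq_zero
    {Fq : Type*} [Field Fq] [Fintype Fq]
    {f : Polynomial Fq} {S : Finset (Polynomial Fq)}
    (hmonic : ∀ g ∈ S, g.Monic) (hirr : ∀ g ∈ S, Irreducible g)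
    (hf : f = ∏ g ∈ S, g)
    {σ : Module.End Fq (AdjoinRoot f)}
    (hσ : ∀ a : AdjoinRoot f, σ a = a ^ Fintype.card Fq)
    {Q : Polynomial Fq} (hQ : ∀ g ∈ S, X ^ g.natDegree - 1 ∣ Q) :
    aeval σ Q = 0 := by
  ext1 a
  obtain ⟨c, hc⟩ := AdjoinRoot.mk_surjective (aeval σ Q a)
  rw [LinearMap.zero_apply, ← hc, AdjoinRoot.mk_eq_zero]
  have key : ∀ g ∈ S, g ∣ c := by
    intro g hg
    obtain ⟨R, rfl⟩ := hQ g hg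
    obtain ⟨p, hp⟩ := AdjoinRoot.mk_surjective (aeval σ R a)
    have hgf : g ∣ f := hf ▸ Finset.dvd_prod_of_mem (fun g => g) hg
    have h1 : f ∣ c - (p ^ (Fintype.card Fq ^ g.natDegree) - p) := by
      rw [← AdjoinRoot.mk_eq_zero, map_sub, hc, map_sub, map_pow, hp, map_mul,
        Module.End.mul_apply]
      simp [end_pow_apply_of_apply_eq_pow hσ]
    exact (dvd_iff_dvd_of_dvd_sub (hgf.trans h1)).2
      (irreducible_dvd_pow_card_pow_sub (hirr g hg) p)
  rw [hf]
  refine Finset.prod_dvd_of_coprime ?_ key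
  intro g hg g' hg' hne
  refine ((hirr g hg).coprime_iff_not_dvd).2 fun hdvd => hne ?_
  exact eq_of_monic_of_associated (hmonic g hg) (hmonic g' hg')
    ((hirr g hg).associated_of_dvd (hirr g' hg') hdvd)

/-- If a monic squarefree `f ∈ F_q[x]` has at least two distinct monic irreducible factors
(the elements of the finset `S`), then the minimal polynomial of the Frobenius
`F_q`-linear endomorphism `σ` of `F_q[x]/(f)` has degree strictly less than `deg f`. -/
theorem frobenius_minpoly_degree_lt
    (Fq : Type*) [Field Fq] [Fintype Fq]
    (f : Polynomial Fq) (S : Finset (Polynomial Fq))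
    (hmonic : ∀ g ∈ S, g.Monic) (hirr : ∀ g ∈ S, Irreducible g)
    (hf : f = ∏ g ∈ S, g) (hS : 2 ≤ S.card)
    (σ : Module.End Fq (AdjoinRoot f))
    (hσ : ∀ a : AdjoinRoot f, σ a = a ^ Fintype.card Fq) :
    (minpoly Fq σ).natDegree < f.natDegree := by
  classical
  obtain ⟨g₀, h₀, g₁, h₁, hne⟩ := Finset.one_lt_card.1 hS
  obtain ⟨H, hH⟩ : (X - 1 : Polynomial Fq) ∣ X ^ g₁.natDegree - 1 := sub_one_dvd_pow_sub_one _ _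
  set E : Polynomial Fq := ∏ g ∈ S.erase g₁, (X ^ g.natDegree - 1) with hE
  have hEdvd : ∀ g ∈ S, g ≠ g₁ → X ^ g.natDegree - 1 ∣ E := fun g hg hgne =>
    Finset.dvd_prod_of_mem (fun g : Polynomial Fq => (X ^ g.natDegree - 1 : Polynomial Fq))
      (Finset.mem_erase.2 ⟨hgne, hg⟩)
  have hQ : ∀ g ∈ S, X ^ g.natDegree - 1 ∣ H * E := by
    intro g hg
    -- For `g = g₁`, the factor `X - 1` missing from `H` is supplied by the factor of `E` indexed by `g₀`.
    by_cases hgg : g = g₁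
    · rw [hgg, hH, mul_comm]
      exact mul_dvd_mul_left _ ((sub_one_dvd_pow_sub_one _ _).trans (hEdvd g₀ h₀ hne))
    · exact (hEdvd g hg hgg).mul_left _
  have hP : (X - 1) * (H * E) = ∏ g ∈ S, (X ^ g.natDegree - 1 : Polynomial Fq) := by
    rw [← mul_assoc, ← hH, hE,
      Finset.mul_prod_erase S (fun g => (X ^ g.natDegree - 1 : Polynomial Fq)) h₁]
  have hm : ∀ g ∈ S, (X ^ g.natDegree - 1 : Polynomial Fq).Monic := fun g hg => by
    simpa using monic_X_pow_sub_C (1 : Fq) (hirr g hg).natDegree_pos.ne'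
  have hPdeg : (∏ g ∈ S, (X ^ g.natDegree - 1 : Polynomial Fq)).natDegree = f.natDegree := by
    rw [hf, natDegree_prod_of_monic _ _ hm, natDegree_prod_of_monic _ _ hmonic]
    exact Finset.sum_congr rfl fun g _ => by
      simpa using natDegree_X_pow_sub_C (n := g.natDegree) (r := (1 : Fq))
  have hX : (X - 1 : Polynomial Fq).Monic := by simpa using monic_X_sub_C (1 : Fq)
  have hXd : (X - 1 : Polynomial Fq).natDegree = 1 := by simpa using natDegree_X_sub_C (1 : Fq)
  have hne0 : H * E ≠ 0 := by
    intro h0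
    rw [h0, mul_zero] at hP
    exact (monic_prod_of_monic _ _ hm).ne_zero hP.symm
  have hdeg : 1 + (H * E).natDegree = f.natDegree := by
    rw [← hPdeg, ← hP, natDegree_mul hX.ne_zero hne0, hXd]
  have hle : (minpoly Fq σ).natDegree ≤ (H * E).natDegree :=
    natDegree_le_of_dvd (minpoly.dvd _ _ (aeval_frobenius_eq_zero hmonic hirr hf hσ hQ)) hne0
  omega
end

section
/- Let F_q be a finite field of characteristic p with q elements, let k ≥ 2 be an integer with p ∤ k, and let g_0 be a monic irreducible factor of λ^k − 1 over F_q. If deg(g_0) > k/2, then k is odd, g_0 equals the k-th cyclotomic polynomial Φ_k over F_q (so Φ_k is irreducible over F_q and deg(g_0) = φ(k)), and deg(g_0) is even. -/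
open Polynomial

/-!
Since `X ^ k - 1` is the product of the `cyclotomic d` over `d ∣ k`, the irreducible `g₀` divides
one of them. A proper divisor `d` of `k` is at most `k / 2`, so `deg g₀ ≤ φ(d) ≤ d` rules out
`d < k`, and `g₀ ∣ cyclotomic k`. The degree of an irreducible factor of `cyclotomic k` over `F_q`
is the order of `q` in `(ℤ/k)ˣ`, hence divides `φ(k) ≤ k < 2 deg g₀`; therefore `deg g₀ = φ(k)` and
`g₀ = cyclotomic k`. Finally `φ(k) ≤ k / 2` for even `k`, so `k` is odd, thus `k > 2` and `φ(k)` is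
even.
-/

/-- A residue coprime to `2 * m` is odd, and only `m` of the residues below `2 * m` are odd. -/
lemma totient_two_mul_le (m : ℕ) : Nat.totient (2 * m) ≤ m := by
  have hsub : (Finset.range (2 * m)).filter (fun a => (2 * m).Coprime a) ⊆
      (Finset.range m).image (fun i => 2 * i + 1) := by
    intro a ha
    obtain ⟨hlt, hc⟩ := Finset.mem_filter.1 ha
    have hodd : Odd a := Nat.coprime_two_left.1 (Nat.Coprime.coprime_mul_right hc)
    obtain ⟨i, rfl⟩ := hodd
    exact Finset.mem_image.2 ⟨i, by simp at hlt ⊢; omega, rfl⟩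
  calc Nat.totient (2 * m) ≤ _ := Finset.card_le_card hsub
    _ ≤ (Finset.range m).card := Finset.card_image_le
    _ = m := Finset.card_range m

/-- Let `F_q` have characteristic `p`, let `k ≥ 2` with `p ∤ k`, and let `g₀` be a monic
irreducible factor of `λ^k − 1` over `F_q` of degree greater than `k/2`. Then `k` is odd,
`g₀` is the `k`-th cyclotomic polynomial over `F_q` (so the latter is irreducible and
`deg g₀ = φ(k)`), and `deg g₀` is even. -/
theorem large_factor_of_X_pow_sub_one
    (Fq : Type*) [Field Fq] [Fintype Fq] (p : ℕ) [CharP Fq p]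
    (k : ℕ) (hk : 2 ≤ k) (hpk : ¬ p ∣ k)
    (g₀ : Polynomial Fq) (hmonic : g₀.Monic) (hirr : Irreducible g₀)
    (hdvd : g₀ ∣ (X ^ k - 1 : Polynomial Fq))
    (hdeg : k < 2 * g₀.natDegree) :
    Odd k ∧ g₀ = cyclotomic k Fq ∧ Irreducible (cyclotomic k Fq) ∧
      g₀.natDegree = Nat.totient k ∧ Even g₀.natDegree := by
  have hp : Fact p.Prime := ⟨CharP.char_is_prime Fq p⟩
  have hcyc : g₀ ∣ cyclotomic k Fq := by
    rw [← prod_cyclotomic_eq_X_pow_sub_one (by omega)] at hdvd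
    obtain ⟨d, hd, hgd⟩ := (hirr.prime.dvd_finsetProd_iff _).1 hdvd
    have hdk : d ∣ k := Nat.dvd_of_mem_divisors hd
    have hle : g₀.natDegree ≤ d := by
      have h := natDegree_le_of_dvd hgd (cyclotomic_ne_zero d Fq)
      rw [natDegree_cyclotomic] at h
      exact h.trans (Nat.totient_le d)
    obtain ⟨c, rfl⟩ := hdk
    -- the cofactor `c = k / d` must be `1`
    have hc : c < 2 := by
      by_contra! hc
      nlinarith
    have hc1 : c = 1 := by
      rcases c with _ | _ | c <;> omega
    simpa [hc1] using hgd
  obtain ⟨n, -, hcard⟩ := FiniteField.card Fq p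
  have hcop : p.Coprime k := (Nat.Prime.coprime_iff_not_dvd hp.out).2 hpk
  have hord := natDegree_of_dvd_cyclotomic_of_irreducible (f := n)
    hcard hcop hcyc hirr
  have hne : NeZero k := ⟨by omega⟩
  have hdvdtot : g₀.natDegree ∣ Nat.totient k := by
    rw [hord, ← ZMod.card_units_eq_totient k]
    exact orderOf_dvd_card
  have htot : g₀.natDegree = Nat.totient k := by
    obtain ⟨c, hc⟩ := hdvdtot
    have hpos : 0 < Nat.totient k := Nat.totient_pos.2 (by omega)
    have hle := Nat.totient_le k
    have hc2 : c < 2 := by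
      by_contra! h
      nlinarith
    have hc1 : c = 1 := by
      rcases c with _ | _ | c <;> omega
    simp [hc, hc1]
  have heq : g₀ = cyclotomic k Fq :=
    (eq_of_monic_of_dvd_of_natDegree_le hmonic (cyclotomic.monic k Fq) hcyc
      (by rw [natDegree_cyclotomic, htot])).symm
  have hodd : Odd k := by
    by_contra h
    obtain ⟨m, hm⟩ := (Nat.not_odd_iff_even.1 h).two_dvd
    have := totient_two_mul_le m
    rw [← hm] at this
    omega
  refine ⟨hodd, heq, heq ▸ hirr, htot, ?_⟩
  rw [htot]
  exact Nat.totient_even (by rcases hodd with ⟨m, hm⟩; omega)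
end

section
/- Let g be a monic irreducible polynomial of degree n ≥ 1 over the finite field F_q. The Carlitz map ρ_x : F_q[x]/(g) → F_q[x]/(g) defined by ρ_x(α) = α^q + x·α is an F_q-linear endomorphism, and its characteristic polynomial equals g(λ) − 1 in F_q[λ]. -/
open Polynomial

/-!
Write `K = F_q[x]/(g)` and `θ` for the class of `x`. Every operator `P(ρ)` on `K` is given by
evaluating the polynomial `∑ₖ pₖ Lₖ` over `K`, where `L₀ = X` and `Lₖ₊₁ = Lₖ ^ q + θ Lₖ`; each `Lₖ`
is monic of degree `q ^ k`, has no constant term, and has linear coefficient `θ ^ k`.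

Let `χ` be the characteristic polynomial of `ρ`, monic of degree `n`. By Cayley–Hamilton,
`∑ₖ χₖ Lₖ`, which is monic of degree `q ^ n`, vanishes at all `q ^ n` elements of `K`, so it
is `X ^ (q ^ n) - X`. Comparing linear coefficients gives `χ(θ) = -1`
(`aeval_charpoly_eq_neg_one`). Hence `χ + 1` is monic of degree `n` and is divisible by `g`, so
`χ + 1 = g`.
-/

/-- The polynomial inducing the `k`-th iterate of the Carlitz map `α ↦ α ^ q + θ * α`. -/
noncomputable def carlitzIter {K : Type*} [Field K] (q : ℕ) (θ : K) : ℕ → K[X]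
  | 0 => X
  | k + 1 => carlitzIter q θ k ^ q + C θ * carlitzIter q θ k

section

variable {K : Type*} [Field K] {q : ℕ} {θ : K}

lemma carlitzIter_monic_natDegree (hq : 2 ≤ q) (k : ℕ) :
    (carlitzIter q θ k).Monic ∧ (carlitzIter q θ k).natDegree = q ^ k := by
  induction k with
  | zero => simp [carlitzIter, monic_X]
  | succ k ih =>
    obtain ⟨hm, hd⟩ := ih
    have hpow : (carlitzIter q θ k ^ q).natDegree = q ^ (k + 1) := by
      rw [hm.natDegree_pow, hd, pow_succ']
    have hlt : (C θ * carlitzIter q θ k).natDegree < (carlitzIter q θ k ^ q).natDegree := by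
      rw [hpow]
      refine (natDegree_C_mul_le _ _).trans_lt ?_
      rw [hd]
      exact Nat.pow_lt_pow_right hq (Nat.lt_succ_self k)
    exact ⟨(hm.pow q).add_of_left (degree_lt_degree hlt),
      (natDegree_add_eq_left_of_natDegree_lt hlt).trans hpow⟩

lemma carlitzIter_coeff_zero (hq : 2 ≤ q) (k : ℕ) : (carlitzIter q θ k).coeff 0 = 0 := by
  induction k with
  | zero => simp [carlitzIter]
  | succ k ih =>
    have : q ≠ 0 := by omega
    rw [coeff_zero_eq_eval_zero] at ih ⊢
    simp [carlitzIter, ih, this]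

lemma carlitzIter_coeff_one (hq : 2 ≤ q) (k : ℕ) : (carlitzIter q θ k).coeff 1 = θ ^ k := by
  induction k with
  | zero => simp [carlitzIter]
  | succ k ih =>
    have hX : X ^ q ∣ carlitzIter q θ k ^ q :=
      pow_dvd_pow_of_dvd (X_dvd_iff.2 (carlitzIter_coeff_zero hq k)) q
    have h0 : (carlitzIter q θ k ^ q).coeff 1 = 0 := X_pow_dvd_iff.1 hX 1 (by omega)
    simp [carlitzIter, h0, ih, pow_succ']

end

/-- By Cayley–Hamilton the polynomial `∑ₖ χₖ Lₖ - X ^ (q ^ n) + X` vanishes on all of `K`; its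
degree is below `#K = q ^ n`, so it is zero, and its linear coefficient is `χ(θ) + 1`. -/
lemma aeval_charpoly_eq_neg_one {F K : Type*} [Field F] [Fintype F] [Field K] [Algebra F K]
    [Module.Finite F K] (θ : K) (ρ : Module.End F K)
    (hρ : ∀ α : K, ρ α = α ^ Fintype.card F + θ * α) :
    aeval θ ρ.charpoly = -1 := by
  have : Finite K := Module.finite_of_finite F
  have := Fintype.ofFinite K
  set q := Fintype.card F with hqdef
  set n := Module.finrank F K with hndef
  have hq : 2 ≤ q := Fintype.one_lt_card
  have hn : 0 < n := Module.finrank_pos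
  have hcard : Fintype.card K = q ^ n := Module.card_eq_pow_finrank
  have hqn : 1 < q ^ n := Nat.one_lt_pow hn.ne' hq
  have hdeg : ρ.charpoly.natDegree = n := ρ.charpoly_natDegree
  have hlead : ρ.charpoly.coeff n = 1 := by
    rw [← hdeg]; exact ρ.charpoly_monic
  have hiter : ∀ (k : ℕ) (α : K), (ρ ^ k) α = (carlitzIter q θ k).eval α := by
    intro k α
    induction k with
    | zero => simp [carlitzIter]
    | succ k ih => rw [pow_succ', Module.End.mul_apply, ih, hρ]; simp [carlitzIter]
  set M : K[X] := (∑ k ∈ Finset.range n, C (algebraMap F K (ρ.charpoly.coeff k)) *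
    carlitzIter q θ k) + (carlitzIter q θ n - X ^ q ^ n) + X with hM
  have heval : ∀ α : K, M.eval α = 0 := by
    intro α
    have hCH := congrArg (fun f : Module.End F K => f α) ρ.aeval_self_charpoly
    simp only [aeval_eq_sum_range, hdeg, LinearMap.sum_apply, LinearMap.smul_apply, hiter,
      LinearMap.zero_apply] at hCH
    rw [Finset.sum_range_succ, hlead, one_smul] at hCH
    simp only [Algebra.smul_def] at hCH
    have hfrob : α ^ q ^ n = α := by rw [← hcard]; exact FiniteField.pow_card α
    simp only [hM, eval_add, eval_sub, eval_finsetSum, eval_mul, eval_C, eval_pow, eval_X, hfrob]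
    linear_combination hCH
  have hMdeg : M.degree < (q ^ n : ℕ) := by
    refine (degree_add_le _ _).trans_lt (max_lt ((degree_add_le _ _).trans_lt (max_lt ?_ ?_)) ?_)
    · refine (degree_sum_le _ _).trans_lt ((Finset.sup_lt_iff (WithBot.bot_lt_coe _)).2 ?_)
      intro k hk
      refine degree_le_natDegree.trans_lt (Nat.cast_lt.2 ((natDegree_C_mul_le _ _).trans_lt ?_))
      rw [(carlitzIter_monic_natDegree hq k).2]
      exact Nat.pow_lt_pow_right hq (Finset.mem_range.1 hk)
    · obtain ⟨hm, hd⟩ := carlitzIter_monic_natDegree (θ := θ) hq n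
      have hd' : (carlitzIter q θ n).degree = (q ^ n : ℕ) := by
        rw [degree_eq_natDegree hm.ne_zero, hd]
      rw [← hd']
      exact degree_sub_lt_left (by rw [hd', degree_X_pow]) hm.ne_zero
        (by rw [hm.leadingCoeff, (monic_X_pow _).leadingCoeff])
    · rw [degree_X]; exact_mod_cast hqn
  have hM0 : M = 0 := by
    refine eq_zero_of_degree_lt_of_eval_finset_eq_zero Finset.univ ?_ fun α _ => heval α
    rwa [Finset.card_univ, hcard]
  have h1 : M.coeff 1 = 0 := by rw [hM0, coeff_zero]
  simp only [hM, coeff_add, coeff_sub, finsetSum_coeff, coeff_C_mul, carlitzIter_coeff_one hq,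
    coeff_X_pow, hqn.ne, if_false, coeff_X_one] at h1
  rw [aeval_eq_sum_range, hdeg, Finset.sum_range_succ, hlead, one_smul]
  simp only [Algebra.smul_def]
  linear_combination h1

/-- For a monic irreducible `g ∈ F_q[x]` of degree `n ≥ 1`, the characteristic polynomial
of the Carlitz `F_q`-linear map `ρ_x : α ↦ α^q + x·α` on `F_q[x]/(g)` equals `g(λ) − 1`. -/
theorem carlitz_charpoly_irreducible
    (Fq : Type*) [Field Fq] [Fintype Fq]
    (g : Polynomial Fq) (hmonic : g.Monic) (hirr : Irreducible g)
    (hn : 1 ≤ g.natDegree)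
    [Module.Finite Fq (AdjoinRoot g)]
    (ρ : Module.End Fq (AdjoinRoot g))
    (hρ : ∀ α : AdjoinRoot g, ρ α = α ^ Fintype.card Fq + AdjoinRoot.root g * α) :
    LinearMap.charpoly ρ = g - 1 := by
  have : Fact (Irreducible g) := ⟨hirr⟩
  have hroot : aeval (AdjoinRoot.root g) ρ.charpoly = -1 :=
    aeval_charpoly_eq_neg_one (AdjoinRoot.root g) ρ hρ
  have hdvd : g ∣ ρ.charpoly + 1 := by
    rw [← AdjoinRoot.mk_eq_zero, ← AdjoinRoot.aeval_eq, map_add, hroot, map_one, neg_add_cancel]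
  have hfin : Module.finrank Fq (AdjoinRoot g) = g.natDegree := by
    rw [(AdjoinRoot.powerBasis hmonic.ne_zero).finrank, AdjoinRoot.powerBasis_dim]
  have hdeg : ρ.charpoly.natDegree = g.natDegree := ρ.charpoly_natDegree.trans hfin
  have hlt : (1 : Fq[X]).natDegree < ρ.charpoly.natDegree := by
    rw [natDegree_one, hdeg]; exact hn
  have hmon : (ρ.charpoly + 1).Monic := ρ.charpoly_monic.add_of_left (degree_lt_degree hlt)
  have hle : (ρ.charpoly + 1).natDegree ≤ g.natDegree := by
    rw [natDegree_add_eq_left_of_natDegree_lt hlt, hdeg]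
  exact eq_sub_of_add_eq (eq_of_monic_of_dvd_of_natDegree_le hmonic hmon hdvd hle)
end

section
/- Let g be a monic irreducible polynomial over the finite field F_q. There exists an F_q-linear bijection ψ : F_q[x]/(g(x)) → F_q[x]/(g(x) − 1) such that for every α ∈ F_q[x]/(g(x)), ψ(α^q + x·α) = x·ψ(α), where on the right-hand side x·ψ(α) denotes multiplication by the image of x in F_q[x]/(g(x) − 1). In other words, the Carlitz F_q[x]-module ρ(F_q[x]/(g(x))) is isomorphic to F_q[x]/(g(x) − 1) with its standard F_q[x]-module structure. -/
/-!
Write `A = F_q[x]/(g)`, a field with `q ^ d` elements where `d = deg g`, let `τ` be its Frobenius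
`α ↦ α ^ q` over `F_q`, and let `φ = τ + x` be the Carlitz endomorphism. It suffices to show that
`φ` has minimal polynomial `g - 1`: its degree is then `d = dim A`, so a vector whose annihilator
is that of the whole `F_q[X]`-module (it exists since `F_q[X]` is a PID) is a cyclic vector.

Expand `f(φ) = ∑ᵢ cᵢ(f) τ ^ i` formally in the ring of twisted polynomials, where `τ a = τ(a) τ`.
Here `c₀(f) = f(x)`, the leading coefficients of `f(φ)` and `f` agree (`skewCoeff_natDegree`), and
since `f(φ)` commutes with `φ` the coefficients satisfy the recursion
`cᵢ₊₁ τ^(i+1)(x) + cᵢ = x cᵢ₊₁ + τ(cᵢ)` (`skewCoeff_recursion`).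
For `f = g` one has `c₀ = 0`, and `τ ^ i (x) ≠ x` for `0 < i < d`, so the recursion gives `cᵢ = 0`
for all `i < d`, whence `g(φ) = τ ^ d = 1`. No monic `f` of degree `m < d` kills `φ`, because
`1, τ, …, τ ^ m` are linearly independent over `A` by Dedekind's lemma.
-/

open Polynomial

lemma commute_aeval_left {R A : Type*} [CommRing R] [Ring A] [Algebra R A] {a b : A}
    (h : Commute a b) (f : R[X]) : Commute (aeval a f) b := by
  rw [aeval_eq_sum_range]
  exact Commute.sum_left _ _ _ fun i _ => (h.pow_left i).smul_left _

section Skew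

variable {K L : Type*} [CommRing K] [CommRing L] [Algebra K L] (τ : L →ₐ[K] L) (x : L)

/-- The `K`-linear endomorphism `α ↦ τ α + x α`; the Carlitz action of the variable when `τ` is
the Frobenius. -/
noncomputable def carlitzEnd : Module.End K L := τ.toLinearMap + LinearMap.mulLeft K x

/-- Left multiplication by `τ + x` on twisted polynomials `∑ᵢ cᵢ τ ^ i`, encoded by their
coefficient sequences (with no finiteness condition on the support). -/
def skewLeft : Module.End K (ℕ → L) where
  toFun c i := x * c i + (match i with | 0 => 0 | j + 1 => τ (c j))
  map_add' c c' := by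
    ext i
    cases i <;> simp <;> ring
  map_smul' r c := by
    ext i
    cases i <;> simp

/-- Right multiplication by `τ + x` on twisted polynomials `∑ᵢ cᵢ τ ^ i`. -/
def skewRight : Module.End K (ℕ → L) where
  toFun c i := (τ ^ i) x * c i + (match i with | 0 => 0 | j + 1 => c j)
  map_add' c c' := by
    ext i
    cases i <;> simp <;> ring
  map_smul' r c := by
    ext i
    cases i <;> simp

lemma skewLeft_zero (c : ℕ → L) : skewLeft τ x c 0 = x * c 0 := by simp [skewLeft]

lemma skewLeft_succ (c : ℕ → L) (i : ℕ) :
    skewLeft τ x c (i + 1) = x * c (i + 1) + τ (c i) := rfl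

lemma skewRight_zero (c : ℕ → L) : skewRight τ x c 0 = x * c 0 := by simp [skewRight]

lemma skewRight_succ (c : ℕ → L) (i : ℕ) :
    skewRight τ x c (i + 1) = (τ ^ (i + 1)) x * c (i + 1) + c i := rfl

lemma commute_skewLeft_skewRight : Commute (skewLeft τ x) (skewRight τ x) := by
  refine LinearMap.ext fun c => funext fun i => ?_
  simp only [Module.End.mul_apply]
  rcases i with _ | _ | i
  · simp only [skewLeft_zero, skewRight_zero]
  · simp only [skewLeft_succ, skewRight_succ, skewLeft_zero, skewRight_zero, map_mul, pow_one,
      zero_add]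
    ring
  · simp only [skewLeft_succ, skewRight_succ, map_mul, map_add]
    rw [show τ ((τ ^ (i + 1)) x) = (τ ^ (i + 1 + 1)) x by rw [pow_succ' τ (i + 1)]; rfl]
    ring

/-- The coefficients `cᵢ(f)` in the twisted expansion `f(τ + x) = ∑ᵢ cᵢ(f) τ ^ i`. -/
noncomputable def skewCoeff (f : K[X]) : ℕ → L := aeval (skewLeft τ x) f (Pi.single 0 1)

lemma skewRight_one_eq_skewLeft_one :
    skewRight τ x (Pi.single 0 1) = skewLeft τ x (Pi.single 0 1) := by
  funext i
  rcases i with _ | _ | i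
  · simp only [skewLeft_zero, skewRight_zero]
  · simp [skewLeft_succ, skewRight_succ]
  · simp [skewLeft_succ, skewRight_succ]

/-- Both sides are the coefficient of `τ ^ (i + 1)` in `f(φ) φ = φ f(φ)`, with `φ = τ + x`. -/
lemma skewCoeff_recursion (f : K[X]) (i : ℕ) :
    (τ ^ (i + 1)) x * skewCoeff τ x f (i + 1) + skewCoeff τ x f i =
      x * skewCoeff τ x f (i + 1) + τ (skewCoeff τ x f i) := by
  rw [← skewRight_succ, ← skewLeft_succ]
  refine congrFun ?_ (i + 1)
  have h1 : Commute (aeval (skewLeft τ x) f) (skewRight τ x) :=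
    commute_aeval_left (commute_skewLeft_skewRight τ x) f
  have h2 : Commute (aeval (skewLeft τ x) f) (skewLeft τ x) :=
    commute_aeval_left (Commute.refl _) f
  have e1 := LinearMap.congr_fun h1.eq (Pi.single 0 1)
  have e2 := LinearMap.congr_fun h2.eq (Pi.single 0 1)
  simp only [Module.End.mul_apply] at e1 e2
  rw [skewCoeff, ← e1, ← e2, skewRight_one_eq_skewLeft_one]

lemma skewCoeff_X_pow_succ (n : ℕ) :
    skewCoeff τ x (X ^ (n + 1) : K[X]) = skewLeft τ x (skewCoeff τ x (X ^ n)) := by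
  simp [skewCoeff, pow_succ']

lemma skewCoeff_eq_sum (f : K[X]) (i : ℕ) :
    skewCoeff τ x f i =
      ∑ k ∈ Finset.range (f.natDegree + 1), f.coeff k • skewCoeff τ x (X ^ k) i := by
  simp only [skewCoeff, map_pow, aeval_X]
  rw [aeval_eq_sum_range, LinearMap.sum_apply, Finset.sum_apply]
  rfl

lemma skewCoeff_X_pow_of_lt (n : ℕ) :
    ∀ i, n < i → skewCoeff τ x (X ^ n : K[X]) i = 0 := by
  induction n with
  | zero => intro i hi; simp [skewCoeff, hi.ne']
  | succ n ih =>
    rintro (_ | i) hi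
    · omega
    · rw [skewCoeff_X_pow_succ, skewLeft_succ, ih _ (by omega), ih _ (by omega)]
      simp

lemma skewCoeff_X_pow_self (n : ℕ) : skewCoeff τ x (X ^ n : K[X]) n = 1 := by
  induction n with
  | zero => simp [skewCoeff]
  | succ n ih =>
    rw [skewCoeff_X_pow_succ, skewLeft_succ, ih, skewCoeff_X_pow_of_lt _ _ _ _ (by omega)]
    simp

lemma skewCoeff_natDegree (f : K[X]) (hf : f.Monic) : skewCoeff τ x f f.natDegree = 1 := by
  rw [skewCoeff_eq_sum, Finset.sum_range_succ, Finset.sum_eq_zero, skewCoeff_X_pow_self,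
    hf.coeff_natDegree]
  · simp
  · intro k hk
    rw [skewCoeff_X_pow_of_lt _ _ _ _ (Finset.mem_range.1 hk), smul_zero]

lemma skewCoeff_X_pow_zero (n : ℕ) : skewCoeff τ x (X ^ n : K[X]) 0 = x ^ n := by
  induction n with
  | zero => simp [skewCoeff]
  | succ n ih => rw [skewCoeff_X_pow_succ, skewLeft_zero, ih, pow_succ']

lemma skewCoeff_zero (f : K[X]) : skewCoeff τ x f 0 = aeval x f := by
  rw [skewCoeff_eq_sum, aeval_eq_sum_range]
  simp [skewCoeff_X_pow_zero]

lemma carlitzEnd_pow_apply (n N : ℕ) (hN : n < N) (α : L) :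
    (carlitzEnd τ x ^ n) α =
      ∑ i ∈ Finset.range N, skewCoeff τ x (X ^ n : K[X]) i * (τ ^ i) α := by
  induction n generalizing N with
  | zero =>
    rw [Finset.sum_eq_single_of_mem 0 (by simpa using hN)]
    · simp [skewCoeff]
    · intro i _ hi; simp [skewCoeff, hi]
  | succ n ih =>
    obtain ⟨M, rfl⟩ : ∃ M, N = M + 1 := ⟨N - 1, by omega⟩
    rw [pow_succ', Module.End.mul_apply, Finset.sum_range_succ', skewCoeff_X_pow_succ]
    simp only [skewLeft_zero, skewLeft_succ, add_mul, Finset.sum_add_distrib]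
    -- Write `φ = τ + x`: `φ ^ n α` is expanded over `range M` under `τ`, which shifts degrees by one,
    -- and over `range (M + 1)` under `x`.
    have h1 := ih M (by omega)
    have h2 := ih (M + 1) (by omega)
    rw [carlitzEnd, LinearMap.add_apply, ← carlitzEnd, LinearMap.mulLeft_apply]
    nth_rw 2 [h2]
    rw [h1, Finset.sum_range_succ', mul_add, Finset.mul_sum]
    simp only [AlgHom.toLinearMap_apply, map_sum, map_mul, pow_succ' τ, AlgHom.mul_apply, mul_assoc]
    ring

lemma aeval_carlitzEnd_apply (f : K[X]) (α : L) :
    aeval (carlitzEnd τ x) f α =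
      ∑ i ∈ Finset.range (f.natDegree + 1), skewCoeff τ x f i * (τ ^ i) α := by
  simp only [skewCoeff_eq_sum τ x f, Finset.sum_mul]
  rw [Finset.sum_comm, aeval_eq_sum_range, LinearMap.sum_apply]
  refine Finset.sum_congr rfl fun k hk => ?_
  rw [LinearMap.smul_apply, carlitzEnd_pow_apply τ x k _ (Finset.mem_range.1 hk), Finset.smul_sum]
  simp only [smul_mul_assoc]

end Skew

lemma finrank_adjoinRoot {K : Type*} [Field K] {f : K[X]} (hf : f ≠ 0) :
    Module.finrank K (AdjoinRoot f) = f.natDegree := by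
  rw [(AdjoinRoot.powerBasis hf).finrank, AdjoinRoot.powerBasis_dim]

section Finite

open FiniteField

variable {K : Type*} [Field K] [Fintype K] {g : K[X]} [Fact (Irreducible g)]

lemma orderOf_frob (hg : g.Monic) :
    orderOf (frobeniusAlgHom K (AdjoinRoot g)) = g.natDegree := by
  have : Module.Finite K (AdjoinRoot g) := hg.finite_adjoinRoot
  have : Finite (AdjoinRoot g) := Module.finite_of_finite K
  rw [orderOf_frobeniusAlgHom, finrank_adjoinRoot hg.ne_zero]

/-- The element `x` generates the field `K[x]/(g)`, so only the powers of the Frobenius that are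
the identity fix it. -/
lemma frob_pow_root_ne (hg : g.Monic) (i : ℕ) (hi : 0 < i) (hid : i < g.natDegree) :
    (frobeniusAlgHom K (AdjoinRoot g) ^ i) (AdjoinRoot.root g) ≠ AdjoinRoot.root g := by
  intro h
  have h1 : frobeniusAlgHom K (AdjoinRoot g) ^ i = 1 := AdjoinRoot.algHom_ext h
  have := Nat.le_of_dvd hi (orderOf_dvd_of_pow_eq_one h1)
  rw [orderOf_frob hg] at this
  omega

lemma skewCoeff_self_eq_zero (hg : g.Monic) (i : ℕ) (hid : i < g.natDegree) :
    skewCoeff (frobeniusAlgHom K (AdjoinRoot g)) (AdjoinRoot.root g) g i = 0 := by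
  induction i with
  | zero => rw [skewCoeff_zero, AdjoinRoot.aeval_eq, AdjoinRoot.mk_self]
  | succ i ih =>
    have h := skewCoeff_recursion (frobeniusAlgHom K (AdjoinRoot g)) (AdjoinRoot.root g) g i
    rw [ih (by omega), map_zero, add_zero, add_zero] at h
    by_contra hne
    exact frob_pow_root_ne hg (i + 1) (by omega) hid (mul_right_cancel₀ hne h)

lemma aeval_carlitzEnd_self (hg : g.Monic) :
    aeval (carlitzEnd (frobeniusAlgHom K (AdjoinRoot g)) (AdjoinRoot.root g)) g = 1 := by
  refine LinearMap.ext fun α => ?_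
  rw [aeval_carlitzEnd_apply, Finset.sum_range_succ, skewCoeff_natDegree _ _ _ hg,
    Finset.sum_eq_zero, ← orderOf_frob hg, pow_orderOf_eq_one]
  · simp
  · intro i hi
    rw [skewCoeff_self_eq_zero hg i (Finset.mem_range.1 hi), zero_mul]

/-- By Dedekind's lemma, `1, τ, …, τ ^ (d - 1)` are linearly independent over `K[x]/(g)`. -/
lemma natDegree_le_of_aeval_carlitzEnd_eq_zero (hg : g.Monic) (f : K[X]) (hf : f.Monic)
    (h : aeval (carlitzEnd (frobeniusAlgHom K (AdjoinRoot g)) (AdjoinRoot.root g)) f = 0) :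
    g.natDegree ≤ f.natDegree := by
  by_contra! hlt
  have hinj : Function.Injective
      fun i : Fin (f.natDegree + 1) => frobeniusAlgHom K (AdjoinRoot g) ^ (i : ℕ) := by
    intro i j hij
    refine Fin.ext (pow_injOn_Iio_orderOf ?_ ?_ hij) <;>
      rw [orderOf_frob hg, Set.mem_Iio] <;> omega
  have hli := (linearIndependent_algHom_toLinearMap K (AdjoinRoot g) (AdjoinRoot g)).comp _ hinj
  rw [Fintype.linearIndependent_iff] at hli
  have := hli (fun i => skewCoeff (frobeniusAlgHom K (AdjoinRoot g)) (AdjoinRoot.root g) f i) ?_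
    (Fin.last _)
  · simp [skewCoeff_natDegree _ _ _ hf] at this
  · refine LinearMap.ext fun α => ?_
    have h' := LinearMap.congr_fun h α
    rw [aeval_carlitzEnd_apply, Finset.sum_range] at h'
    simpa [LinearMap.sum_apply] using h'

end Finite

lemma degree_one_lt_of_irreducible {K : Type*} [Field K] {g : K[X]} (hirr : Irreducible g) :
    (1 : K[X]).degree < g.degree := by
  rw [degree_one]
  exact hirr.degree_pos

lemma minpoly_carlitzEnd {K : Type*} [Field K] [Fintype K] {g : K[X]} [Fact (Irreducible g)]
    (hg : g.Monic) :
    minpoly K (carlitzEnd (FiniteField.frobeniusAlgHom K (AdjoinRoot g)) (AdjoinRoot.root g)) =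
      g - 1 := by
  have hlt := degree_one_lt_of_irreducible (Fact.out : Irreducible g)
  refine (minpoly.unique' K _ (hg.sub_of_left hlt) ?_ fun q hq => ?_).symm
  · rw [map_sub, aeval_carlitzEnd_self hg, map_one, sub_self]
  · by_contra! hne
    obtain ⟨hne, h0⟩ := hne
    have hm := natDegree_le_of_aeval_carlitzEnd_eq_zero hg _ (monic_mul_leadingCoeff_inv hne)
      (by rw [map_mul, h0, zero_mul])
    rw [natDegree_mul_leadingCoeff_inv q hne] at hm
    rw [degree_sub_eq_left_of_degree_lt hlt] at hq
    exact absurd (natDegree_lt_natDegree hne hq) (not_lt.2 hm)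

/-- For monic irreducible `g ∈ F_q[x]`, there is an `F_q`-linear bijection
`ψ : F_q[x]/(g(x)) ≃ F_q[x]/(g(x) − 1)` intertwining the Carlitz action
`α ↦ α^q + x·α` on the source with multiplication by `x` on the target. -/
theorem carlitz_module_iso
    (Fq : Type*) [Field Fq] [Fintype Fq]
    (g : Polynomial Fq) (hmonic : g.Monic) (hirr : Irreducible g) :
    ∃ ψ : AdjoinRoot g ≃ₗ[Fq] AdjoinRoot (g - 1),
      ∀ α : AdjoinRoot g,
        ψ (α ^ Fintype.card Fq + AdjoinRoot.root g * α)
          = AdjoinRoot.root (g - 1) * ψ α := by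
  have : Fact (Irreducible g) := ⟨hirr⟩
  have hfin : Module.Finite Fq (AdjoinRoot g) := hmonic.finite_adjoinRoot
  have hlt := degree_one_lt_of_irreducible hirr
  have hmonic' : (g - 1).Monic := hmonic.sub_of_left hlt
  have hfin' : Module.Finite Fq (AdjoinRoot (g - 1)) := hmonic'.finite_adjoinRoot
  set φ := carlitzEnd (FiniteField.frobeniusAlgHom Fq (AdjoinRoot g)) (AdjoinRoot.root g) with hφ
  have hφa (α : AdjoinRoot g) : φ α = α ^ Fintype.card Fq + AdjoinRoot.root g * α := by
    simp [hφ, carlitzEnd]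
  obtain ⟨v, hv⟩ := Module.exists_ker_toSpanSingleton_eq_annihilator Fq[X] (Module.AEval' φ)
  rw [← span_minpoly_eq_annihilator, minpoly_carlitzEnd hmonic, eq_comm] at hv
  -- The map `p ↦ p(φ) v`, which is injective on `F_q[X] ⧸ (g - 1)` by the choice of `v`.
  let e' : (Fq[X] ⧸ Ideal.span {g - 1}) →ₗ[Fq[X]] Module.AEval' φ :=
    Submodule.liftQ _ _ hv.le
  have he' : Function.Injective e' := LinearMap.ker_eq_bot.1 (Submodule.ker_liftQ_eq_bot' _ _ hv)
  let e : AdjoinRoot (g - 1) →ₗ[Fq] AdjoinRoot g :=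
    (Module.AEval'.of φ).symm.toLinearMap ∘ₗ e'.restrictScalars Fq
  have he : Function.Injective e := (Module.AEval'.of φ).symm.injective.comp he'
  have heX (β : AdjoinRoot (g - 1)) : e (AdjoinRoot.root (g - 1) * β) = φ (e β) := by
    induction β using AdjoinRoot.induction_on with | _ p =>
    change (Module.AEval'.of φ).symm (e' ((X : Fq[X]) • Ideal.Quotient.mk _ p)) = _
    rw [map_smul]
    exact Module.AEval'.of_symm_X_smul φ _
  let E : AdjoinRoot (g - 1) ≃ₗ[Fq] AdjoinRoot g := LinearEquiv.ofInjectiveOfFinrankEq e he (by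
    rw [finrank_adjoinRoot hmonic'.ne_zero, finrank_adjoinRoot hmonic.ne_zero]
    exact natDegree_eq_of_degree_eq (degree_sub_eq_left_of_degree_lt hlt))
  have hE (β) : E β = e β := rfl
  refine ⟨E.symm, fun α => ?_⟩
  rw [← hφa, LinearEquiv.symm_apply_eq, hE, heX, ← hE, LinearEquiv.apply_symm_apply]
end

section
/- Let f = f_1 f_2 ⋯ f_m be a monic squarefree polynomial of degree n ≥ 1 over the finite field F_q, written as a product of its distinct monic irreducible factors f_1, …, f_m. Then the characteristic polynomial χ_f ∈ F_q[λ] of the F_q-linear Carlitz map ρ_x : F_q[x]/(f) → F_q[x]/(f), ρ_x(α) = α^q + x·α, equals the product (f_1(λ) − 1)(f_2(λ) − 1)⋯(f_m(λ) − 1). -/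
/-!
The Carlitz map is `ρ = σ + x`, where `σ` is the `q`-Frobenius.

*Irreducible case.* Let `L = F_q[x]/(g)` with `g` irreducible of degree `d`. Since
`σ^j ∘ ρ - σ^j(x) · σ^j = σ^(j+1)`, induction on `j` shows that the polynomial
`∏_{i<j} (X - σ^i x)` over `L`, evaluated at `ρ` with its coefficients acting from the left, is
`σ^j` (`leftEval_frobProd`). For `j = d` the polynomial is `g`, because its roots are the
conjugates of `x`, and `σ^d = 1`; hence `g(ρ) = 1`. The powers `1, σ, …, σ^(d-1)` are linearly
independent over `L` by Dedekind's theorem, so no nonzero polynomial of degree less than `d`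
annihilates `ρ` (`eq_zero_of_leftEval_eq_zero`). By Cayley-Hamilton the difference of `χ_ρ` and
`g - 1`, both monic of degree `d`, is such a polynomial, so it vanishes.

*General case.* An algebra isomorphism commutes with the Carlitz maps, so the Chinese remainder
theorem and the multiplicativity of characteristic polynomials on products reduce the claim to the
irreducible factors.
-/

open Polynomial

section Carlitz

variable (K : Type*) [Field K]

section LeftEval

variable {K} {L : Type*} [Field L] [Algebra K L]

/-- Evaluation of a polynomial with coefficients in `L` at a `K`-linear endomorphism `ρ` of `L`,
the coefficients being written on the left: `∑ aᵢ Xⁱ ↦ ∑ aᵢ • ρⁱ`. It is `L`-linear, but it is not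
multiplicative, as `ρ` need not be `L`-linear. -/
noncomputable def leftEval (ρ : Module.End K L) : L[X] →ₗ[L] Module.End K L :=
  Polynomial.lsum fun i => LinearMap.toSpanSingleton L (Module.End K L) (ρ ^ i)

lemma leftEval_monomial (ρ : Module.End K L) (i : ℕ) (a : L) :
    leftEval ρ (monomial i a) = a • ρ ^ i := by
  simp [leftEval]

lemma leftEval_mul_X (ρ : Module.End K L) (p : L[X]) :
    leftEval ρ (p * X) = leftEval ρ p * ρ := by
  induction p using Polynomial.induction_on' with
  | add p q hp hq => rw [add_mul, map_add, map_add, hp, hq, add_mul]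
  | monomial n a =>
    rw [monomial_mul_X, leftEval_monomial, leftEval_monomial, pow_succ, smul_mul_assoc]

lemma leftEval_mul_X_sub_C (ρ : Module.End K L) (p : L[X]) (a : L) :
    leftEval ρ (p * (X - C a)) = leftEval ρ p * ρ - a • leftEval ρ p := by
  rw [mul_sub, map_sub, leftEval_mul_X, mul_comm p (C a), ← smul_eq_C_mul, map_smul]

lemma leftEval_map (ρ : Module.End K L) (p : K[X]) :
    leftEval ρ (p.map (algebraMap K L)) = aeval ρ p := by
  induction p using Polynomial.induction_on' with
  | add p q hp hq => rw [Polynomial.map_add, map_add, map_add, hp, hq]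
  | monomial n a =>
    rw [map_monomial, leftEval_monomial, aeval_monomial, algebraMap_smul, Algebra.smul_def]

/-- The polynomial `∏_{i<j} (X - σ^i x)`. -/
noncomputable def frobProd (σ : L →ₐ[K] L) (x : L) (j : ℕ) : L[X] :=
  ∏ i ∈ Finset.range j, (X - C ((σ ^ i) x))

lemma frobProd_monic (σ : L →ₐ[K] L) (x : L) (j : ℕ) : (frobProd σ x j).Monic :=
  monic_prod_X_sub_C _ _

lemma frobProd_natDegree (σ : L →ₐ[K] L) (x : L) (j : ℕ) : (frobProd σ x j).natDegree = j := by
  simp [frobProd]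

lemma leftEval_frobProd (σ : L →ₐ[K] L) (x : L) (j : ℕ) :
    leftEval (σ.toLinearMap + LinearMap.mulLeft K x) (frobProd σ x j) = (σ ^ j).toLinearMap := by
  induction j with
  | zero =>
    rw [frobProd, Finset.prod_range_zero, ← monomial_zero_one, leftEval_monomial]
    simp; rfl
  | succ j ih =>
    have h : frobProd σ x (j + 1) = frobProd σ x j * (X - C ((σ ^ j) x)) :=
      Finset.prod_range_succ _ _
    rw [h, leftEval_mul_X_sub_C, ih]
    ext v
    simp [pow_succ]

/-- Since `frobProd σ x i` is monic of degree `i`, a polynomial of degree less than `j` is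
determined by its coordinates in the family `frobProd σ x i`, `i < j`, and by `leftEval_frobProd`
these are coordinates of its value at `ρ` with respect to the `σ^i`. -/
lemma exists_leftEval_eq_sum (σ : L →ₐ[K] L) (x : L) (j : ℕ) (p : L[X]) (hp : p.degree < j) :
    ∃ c : ℕ → L, leftEval (σ.toLinearMap + LinearMap.mulLeft K x) p
        = ∑ i ∈ Finset.range j, c i • (σ ^ i).toLinearMap ∧
      ((∀ i < j, c i = 0) → p = 0) := by
  induction j generalizing p with
  | zero =>
    have h0 : p = 0 := by simpa using hp
    exact ⟨0, by simp [h0], fun _ => h0⟩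
  | succ j ih =>
    have hdeg : (p - C (p.coeff j) * frobProd σ x j).degree < j := by
      rw [degree_lt_iff_coeff_zero] at hp ⊢
      intro m hm
      rw [coeff_sub, coeff_C_mul]
      rcases hm.eq_or_lt with rfl | hlt
      · have := (frobProd_monic σ x j).coeff_natDegree
        rw [frobProd_natDegree] at this
        rw [this, mul_one, sub_self]
      · rw [hp m hlt, coeff_eq_zero_of_natDegree_lt (p := frobProd σ x j)
          (by rwa [frobProd_natDegree]), mul_zero, sub_zero]
    obtain ⟨c, hc, hz⟩ := ih _ hdeg
    refine ⟨Function.update c j (p.coeff j), ?_, fun h => ?_⟩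
    · rw [Finset.sum_range_succ, Function.update_self, ← leftEval_frobProd σ x j, ← map_smul,
        Finset.sum_congr rfl (g := fun i => c i • (σ ^ i).toLinearMap), ← hc, ← map_add,
        smul_eq_C_mul, sub_add_cancel]
      intro i hi
      rw [Function.update_of_ne (Finset.mem_range.1 hi).ne]
    · have h1 : p.coeff j = 0 := by simpa using h j j.lt_succ_self
      have h2 := hz fun i hi => by
        simpa [Function.update_of_ne hi.ne] using h i (hi.trans j.lt_succ_self)
      simpa [h1] using h2

lemma eq_zero_of_leftEval_eq_zero (σ : L →ₐ[K] L) (x : L) (p : L[X])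
    (hp : p.degree < orderOf σ)
    (h : leftEval (σ.toLinearMap + LinearMap.mulLeft K x) p = 0) : p = 0 := by
  obtain ⟨c, hc, hz⟩ := exists_leftEval_eq_sum σ x _ p hp
  refine hz fun i hi => ?_
  have hinj : Function.Injective
      fun i : Fin (orderOf σ) => ((σ ^ (i : ℕ) : L →ₐ[K] L) : L →* L) := by
    intro a b hab
    apply Fin.ext
    refine pow_injOn_Iio_orderOf a.2 b.2 ?_
    ext v
    exact DFunLike.congr_fun hab v
  have hli := (linearIndependent_monoidHom L L).comp _ hinj
  rw [Fintype.linearIndependent_iff] at hli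
  refine hli (fun i => c i) ?_ ⟨i, hi⟩
  ext v
  have h3 := LinearMap.congr_fun (hc.symm.trans h) v
  rw [Finset.sum_range] at h3
  simpa using h3

/-- The irreducible case, for any `σ` of order `[L : K]`. The hypothesis `hx` says that `x`
generates `L`. -/
lemma charpoly_eq_sub_one [Module.Finite K L] (σ : L →ₐ[K] L) (x : L) (g : K[X])
    (hg : g.Monic) (hgx : aeval x g = 0) (hd : g.natDegree = Module.finrank K L)
    (hσ : orderOf σ = Module.finrank K L)
    (hx : ∀ φ ψ : L →ₐ[K] L, φ x = ψ x → φ = ψ) :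
    (σ.toLinearMap + LinearMap.mulLeft K x).charpoly = g - 1 := by
  set ρ := σ.toLinearMap + LinearMap.mulLeft K x with hρ
  have hpos : 0 < Module.finrank K L := Module.finrank_pos
  have hprod : frobProd σ x g.natDegree = g.map (algebraMap K L) := by
    symm
    refine eq_of_monic_of_dvd_of_natDegree_le (frobProd_monic σ x _) (hg.map _) ?_ ?_
    · refine Finset.prod_dvd_of_coprime ?_ ?_
      · intro i hi j hj hij
        refine isCoprime_X_sub_C_of_isUnit_sub (sub_ne_zero.2 fun h => hij ?_).isUnit
        refine pow_injOn_Iio_orderOf (x := σ) ?_ ?_ (hx _ _ h)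
        · simpa [hσ, ← hd] using hi
        · simpa [hσ, ← hd] using hj
      · intro i _
        rw [dvd_iff_isRoot, IsRoot, eval_map_algebraMap, aeval_algHom_apply, hgx, map_zero]
    · rw [frobProd_natDegree, natDegree_map]
  have hgρ : aeval ρ g = 1 := by
    rw [← leftEval_map, ← hprod, leftEval_frobProd, hd, ← hσ, pow_orderOf_eq_one]
    rfl
  have hg1 : (g - 1).Monic := hg.sub_of_left (by
    rw [degree_one, ← natDegree_pos_iff_degree_pos, hd]; exact hpos)
  have hdg : (g - 1).natDegree = Module.finrank K L := by
    rw [← C_1, natDegree_sub_C, hd]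
  have hdeg : (ρ.charpoly - (g - 1)).degree < orderOf σ := by
    have hc := ρ.charpoly_monic
    have hcd : ρ.charpoly.degree = Module.finrank K L := by
      rw [degree_eq_natDegree hc.ne_zero, ρ.charpoly_natDegree]
    rw [hσ, ← hcd]
    refine degree_sub_lt_left ?_ hc.ne_zero (hc.trans hg1.symm)
    rw [hcd, degree_eq_natDegree hg1.ne_zero, hdg]
  have h0 : (ρ.charpoly - (g - 1)).map (algebraMap K L) = 0 := by
    refine eq_zero_of_leftEval_eq_zero σ x _ (by rwa [degree_map]) ?_
    rw [← hρ, leftEval_map, map_sub, map_sub, LinearMap.aeval_self_charpoly, hgρ, map_one,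
      sub_self, sub_self]
  rw [Polynomial.map_eq_zero] at h0
  exact sub_eq_zero.1 h0

end LeftEval

variable [Fintype K]

/-- The Carlitz map `α ↦ α^q + x α` of a commutative `K`-algebra `A` with respect to `x : A`. -/
noncomputable def carlitz (A : Type*) [CommRing A] [Algebra K A] (x : A) : Module.End K A :=
  (FiniteField.frobeniusAlgHom K A).toLinearMap + LinearMap.mulLeft K x

lemma carlitz_apply (A : Type*) [CommRing A] [Algebra K A] (x α : A) :
    carlitz K A x α = α ^ Fintype.card K + x * α := rfl

variable {K}

lemma charpoly_carlitz_irreducible (g : K[X]) (hg : g.Monic) (hi : Irreducible g)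
    [Module.Finite K (AdjoinRoot g)] :
    (carlitz K (AdjoinRoot g) (AdjoinRoot.root g)).charpoly = g - 1 := by
  have := Fact.mk hi
  have hd : g.natDegree = Module.finrank K (AdjoinRoot g) :=
    (finrank_quotient_span_eq_natDegree (f := g)).symm
  have : Finite (AdjoinRoot g) := Module.finite_of_finite K
  exact charpoly_eq_sub_one _ _ g hg (by simp) hd
    (FiniteField.orderOf_frobeniusAlgHom K _) fun φ ψ h => AdjoinRoot.algHom_ext h

lemma charpoly_carlitz_mul (g h : K[X]) (hg : g.Monic) (hh : h.Monic) (hc : IsCoprime g h)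
    [Module.Finite K (AdjoinRoot g)] [Module.Finite K (AdjoinRoot h)]
    [Module.Finite K (AdjoinRoot (g * h))] :
    (carlitz K (AdjoinRoot (g * h)) (AdjoinRoot.root _)).charpoly =
      (carlitz K (AdjoinRoot g) (AdjoinRoot.root g)).charpoly *
        (carlitz K (AdjoinRoot h) (AdjoinRoot.root h)).charpoly := by
  let φ : AdjoinRoot (g * h) →ₐ[K] AdjoinRoot g × AdjoinRoot h :=
    AlgHom.prod (AdjoinRoot.algHomOfDvd K (g * h) g (dvd_mul_right g h))
      (AdjoinRoot.algHomOfDvd K (g * h) h (dvd_mul_left h g))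
  have hroot : φ (AdjoinRoot.root _) = (AdjoinRoot.root g, AdjoinRoot.root h) := by
    simp [φ]
  have hinj : Function.Injective φ.toLinearMap := by
    rw [← LinearMap.ker_eq_bot, LinearMap.ker_eq_bot']
    intro a ha
    induction a using AdjoinRoot.induction_on with
    | ih p =>
      have ha' : (AdjoinRoot.mk g p, AdjoinRoot.mk h p) = 0 := by
        rw [← ha, AlgHom.toLinearMap_apply, ← AdjoinRoot.aeval_eq, ← AdjoinRoot.aeval_eq,
          ← AdjoinRoot.aeval_eq, ← aeval_algHom_apply, hroot, aeval_prod_apply]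
      rw [AdjoinRoot.mk_eq_zero]
      exact hc.mul_dvd (AdjoinRoot.mk_eq_zero.1 (congrArg Prod.fst ha'))
        (AdjoinRoot.mk_eq_zero.1 (congrArg Prod.snd ha'))
  have hrank : Module.finrank K (AdjoinRoot (g * h))
      = Module.finrank K (AdjoinRoot g × AdjoinRoot h) := by
    have e (f : K[X]) : Module.finrank K (AdjoinRoot f) = f.natDegree :=
      finrank_quotient_span_eq_natDegree
    rw [Module.finrank_prod, e, e, e, hg.natDegree_mul hh]
  let e := LinearEquiv.ofInjectiveOfFinrankEq φ.toLinearMap hinj hrank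
  rw [← LinearMap.charpoly_prodMap, ← e.charpoly_conj]
  congr 1
  refine LinearMap.ext fun v => ?_
  obtain ⟨a, rfl⟩ := e.surjective v
  have he : ∀ a, e a = φ a := fun a => rfl
  rw [LinearEquiv.conj_apply_apply, e.symm_apply_apply, he, he, carlitz_apply, map_add, map_mul,
    map_pow, hroot]
  rfl

lemma charpoly_carlitz_prod (S : Finset K[X]) (hmonic : ∀ g ∈ S, g.Monic)
    (hirr : ∀ g ∈ S, Irreducible g) (f : K[X]) (hf : f = ∏ g ∈ S, g)
    [Module.Finite K (AdjoinRoot f)] :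
    (carlitz K (AdjoinRoot f) (AdjoinRoot.root f)).charpoly = ∏ g ∈ S, (g - 1) := by
  classical
  induction S using Finset.induction_on generalizing f with
  | empty =>
    have hd : Module.finrank K (AdjoinRoot f) = 0 := by
      rw [← natDegree_one (R := K), ← Finset.prod_empty (f := fun g : K[X] => g), ← hf]
      exact finrank_quotient_span_eq_natDegree
    rw [Finset.prod_empty]
    exact (LinearMap.charpoly_monic _).natDegree_eq_zero.1
      ((LinearMap.charpoly_natDegree _).trans hd)
  | insert g S hgS ih =>
    have hS : ∀ p ∈ S, p.Monic := fun p hp => hmonic p (Finset.mem_insert_of_mem hp)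
    have hg := hmonic g (Finset.mem_insert_self _ _)
    have hig := hirr g (Finset.mem_insert_self _ _)
    have := hg.finite_adjoinRoot
    have := (monic_prod_of_monic S (fun p => p) hS).finite_adjoinRoot
    rw [Finset.prod_insert hgS] at hf
    subst hf
    rw [Finset.prod_insert hgS, charpoly_carlitz_mul g _ hg
      (monic_prod_of_monic _ _ hS), charpoly_carlitz_irreducible g hg hig,
      ih hS (fun p hp => hirr p (Finset.mem_insert_of_mem hp)) _ rfl]
    refine IsCoprime.prod_right fun p hp => ?_
    refine hig.coprime_iff_not_dvd.2 fun hdvd => hgS ?_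
    rwa [eq_of_monic_of_associated hg (hS p hp)
      (hig.associated_of_dvd (hirr p (Finset.mem_insert_of_mem hp)) hdvd)]

end Carlitz

/-- For a monic squarefree `f ∈ F_q[x]` of degree `n ≥ 1` whose distinct monic irreducible
factors are the elements of the finset `S`, the characteristic polynomial of the Carlitz
`F_q`-linear map `ρ_x : α ↦ α^q + x·α` on `F_q[x]/(f)` equals `∏_{g ∈ S} (g(λ) − 1)`. -/
theorem carlitz_charpoly_eq_prod
    (Fq : Type*) [Field Fq] [Fintype Fq]
    (f : Polynomial Fq) (S : Finset (Polynomial Fq))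
    (hmonic : ∀ g ∈ S, g.Monic) (hirr : ∀ g ∈ S, Irreducible g)
    (hf : f = ∏ g ∈ S, g) (hn : 1 ≤ f.natDegree)
    [Module.Finite Fq (AdjoinRoot f)]
    (ρ : Module.End Fq (AdjoinRoot f))
    (hρ : ∀ α : AdjoinRoot f, ρ α = α ^ Fintype.card Fq + AdjoinRoot.root f * α) :
    LinearMap.charpoly ρ = ∏ g ∈ S, (g - 1) := by
  have h : ρ = carlitz Fq (AdjoinRoot f) (AdjoinRoot.root f) :=
    LinearMap.ext fun α => (hρ α).trans (carlitz_apply Fq _ _ α).symm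
  rw [h]
  exact charpoly_carlitz_prod S hmonic hirr f hf
end

section
/- Let f be a monic squarefree polynomial of degree n ≥ 1 over the finite field F_q of characteristic p, let d be the smallest degree among the monic irreducible factors of f, and suppose p does not divide the number of monic irreducible factors of f of degree d. Let χ_f ∈ F_q[x] be the characteristic polynomial of the F_q-linear Carlitz map ρ_x : F_q[x]/(f) → F_q[x]/(f), ρ_x(α) = α^q + x·α. Then deg(f − χ_f) = n − d; equivalently, the smallest irreducible factor degree of f equals deg(f) − deg(f − χ_f). -/
/-!
Write `τ` for the `q`-power Frobenius, so that the Carlitz map of an element `b` is `ρ = τ + b`.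

If `g` is irreducible of degree `m` with root `θ` generating `K = F_{q^m}`, then `χ_g = g - 1`:
* `g(ρ) = τ ^ m = 1`. Since `ρ` is not `K`-linear, the factorization `g = ∏_{i < m} (X - θ^{q^i})`
  cannot be evaluated at `ρ`, but it can be evaluated at the `K`-linear operator `T ↦ T * ρ` on
  `End_{F_q}(K)`. Because `τ^i * ρ = τ^{i+1} + θ^{q^i} τ^i`, the factor indexed by `i` sends `τ^i`
  to `τ^{i+1}`, so the product sends `1` to `τ^m` (`aeval_precomp_prod`).
* `1, ρ, …, ρ^{m-1}` are linearly independent: their `K`-span contains `1, τ, …, τ^{m-1}`, which are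
  `K`-independent by Dedekind.
So `g - 1` is the minimal polynomial of `ρ`, and it has the degree of the characteristic polynomial.

By the Chinese remainder theorem, `χ_f = ∏ (g - 1)` over the irreducible factors `g` of `f`
(`charpoly_carlitzMap_root_prod`). Expanding the product, `f - χ_f` is the sum of the `f / g` plus
terms of degree at most `n - 2d`, so its coefficient in degree `n - d` is the number of factors of
degree `d`, and all higher coefficients vanish (`prod_sub_prod_sub_one`).
-/

open Polynomial

/-- Right multiplication `T ↦ T * ρ` on `End_{Fq}(B)`. It commutes with left multiplication by
elements of `B`, so it is `B`-linear even when `ρ` is only `Fq`-linear. -/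
noncomputable def precomp {Fq : Type*} [Field Fq] {B : Type*} [CommRing B] [Algebra Fq B]
    (ρ : Module.End Fq B) :
    Module.End B (Module.End Fq B) where
  toFun T := T * ρ
  map_add' _ _ := add_mul _ _ _
  map_smul' _ _ := rfl

/-- Evaluating at the `B`-linear operator `precomp ρ` allows coefficients in `B`, and on
polynomials over `Fq` it recovers evaluation at `ρ`. -/
theorem aeval_precomp {Fq : Type*} [Field Fq] {B : Type*} [CommRing B] [Algebra Fq B]
    (ρ : Module.End Fq B) (h : Fq[X]) :
    aeval (precomp ρ) (h.map (algebraMap Fq B)) 1 = aeval ρ h := by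
  have hpow : ∀ n T, (precomp ρ ^ n) T = T * ρ ^ n := by
    intro n
    induction n with
    | zero => simp
    | succ n ih => intro T; rw [pow_succ', Module.End.mul_apply, ih, pow_succ, ← mul_assoc]; rfl
  induction h using Polynomial.induction_on' with
  | add p q hp hq => rw [Polynomial.map_add, map_add, map_add, LinearMap.add_apply, hp, hq]
  | monomial n a =>
    simp only [map_monomial, aeval_monomial, Module.End.mul_apply, hpow]
    ext x
    simp

/-- The Carlitz map `α ↦ α ^ q + b * α` on a commutative `Fq`-algebra `B`, for an arbitrary
element `b` in the role of the variable. -/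
noncomputable def carlitzMap (Fq : Type*) [Field Fq] [Fintype Fq] {B : Type*} [CommRing B]
    [Algebra Fq B] (b : B) : Module.End Fq B :=
  (FiniteField.frobeniusAlgHom Fq B).toLinearMap + LinearMap.mulLeft Fq b

section Carlitz
variable {Fq : Type*} [Field Fq] [Fintype Fq]

theorem carlitzMap_apply {B : Type*} [CommRing B] [Algebra Fq B] (b α : B) :
    carlitzMap Fq b α = α ^ Fintype.card Fq + b * α := rfl

theorem charpoly_carlitzMap_algEquiv {B C : Type*} [CommRing B] [Algebra Fq B] [CommRing C]
    [Algebra Fq C] [Module.Finite Fq B] [Module.Finite Fq C] (e : B ≃ₐ[Fq] C) (b : B) :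
    (carlitzMap Fq (e b)).charpoly = (carlitzMap Fq b).charpoly := by
  rw [← e.toLinearEquiv.charpoly_conj]
  congr 1
  ext c
  simp [LinearEquiv.conj_apply, carlitzMap_apply]

theorem charpoly_carlitzMap_prod {B C : Type*} [CommRing B] [Algebra Fq B] [CommRing C]
    [Algebra Fq C] [Module.Finite Fq B] [Module.Finite Fq C] (b : B) (c : C) :
    (carlitzMap Fq (b, c)).charpoly = (carlitzMap Fq b).charpoly * (carlitzMap Fq c).charpoly := by
  rw [← LinearMap.charpoly_prodMap]
  rfl

/-- Multiplicativity over coprime factors, by the Chinese remainder theorem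
`AdjoinRoot (g * h) ≃ AdjoinRoot g × AdjoinRoot h`. -/
theorem charpoly_carlitzMap_root_mul {g h : Fq[X]} (hg : g.Monic) (hh : h.Monic)
    (hgh : IsCoprime g h) [Module.Finite Fq (AdjoinRoot g)] [Module.Finite Fq (AdjoinRoot h)]
    [Module.Finite Fq (AdjoinRoot (g * h))] :
    (carlitzMap Fq (AdjoinRoot.root (g * h))).charpoly =
      (carlitzMap Fq (AdjoinRoot.root g)).charpoly * (carlitzMap Fq (AdjoinRoot.root h)).charpoly := by
  let φ : AdjoinRoot (g * h) →ₐ[Fq] AdjoinRoot g × AdjoinRoot h :=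
    (AdjoinRoot.algHomOfDvd Fq _ _ (dvd_mul_right g h)).prod
      (AdjoinRoot.algHomOfDvd Fq _ _ (dvd_mul_left h g))
  have hφ : φ (AdjoinRoot.root (g * h)) = (AdjoinRoot.root g, AdjoinRoot.root h) := by
    simp [φ, AdjoinRoot.algHomOfDvd]
  have hinj : Function.Injective φ := by
    rw [injective_iff_map_eq_zero]
    intro a ha
    obtain ⟨P, rfl⟩ := AdjoinRoot.mk_surjective a
    have h1 : g ∣ P ∧ h ∣ P := by
      have h2 := Prod.ext_iff.1 ha
      simpa [φ, AdjoinRoot.algHomOfDvd, AdjoinRoot.map, ← AdjoinRoot.algebraMap_eq,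
        ← aeval_def, AdjoinRoot.aeval_eq] using h2
    rw [AdjoinRoot.mk_eq_zero]
    exact hgh.mul_dvd h1.1 h1.2
  have hdim : Module.finrank Fq (AdjoinRoot (g * h)) =
      Module.finrank Fq (AdjoinRoot g × AdjoinRoot h) := by
    rw [Module.finrank_prod]
    have := fun f : Fq[X] => finrank_quotient_span_eq_natDegree (f := f)
    have h2 := hg.natDegree_mul hh
    rw [← this, ← this, ← this] at h2
    exact h2
  have hbij : Function.Bijective φ :=
    ⟨hinj, (LinearMap.injective_iff_surjective_of_finrank_eq_finrank
      (f := φ.toLinearMap) hdim).1 hinj⟩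
  rw [← charpoly_carlitzMap_prod, ← hφ]
  exact (charpoly_carlitzMap_algEquiv (AlgEquiv.ofBijective φ hbij) _).symm

theorem frob_pow_apply {B : Type*} [CommRing B] [Algebra Fq B] (i : ℕ) (x : B) :
    ((FiniteField.frobeniusAlgHom Fq B).toLinearMap ^ i) x = x ^ Fintype.card Fq ^ i := by
  rw [Module.End.coe_pow]
  exact congrFun (pow_iterate _ i) x

theorem frob_pow_toLinearMap {B : Type*} [CommRing B] [Algebra Fq B] (i : ℕ) :
    (FiniteField.frobeniusAlgHom Fq B ^ i).toLinearMap =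
      (FiniteField.frobeniusAlgHom Fq B).toLinearMap ^ i :=
  map_pow AlgHom.toEnd _ i

/-- The twisted commutation rule `τ^i (τ + b) = τ^(i+1) + b^(q^i) τ^i`. -/
theorem frob_comp_carlitzMap {B : Type*} [CommRing B] [Algebra Fq B] (b : B) (i : ℕ) :
    (FiniteField.frobeniusAlgHom Fq B).toLinearMap ^ i * carlitzMap Fq b =
      (FiniteField.frobeniusAlgHom Fq B).toLinearMap ^ (i + 1) +
        b ^ Fintype.card Fq ^ i • (FiniteField.frobeniusAlgHom Fq B).toLinearMap ^ i := by
  rw [carlitzMap, mul_add, ← pow_succ]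
  congr 1
  ext x
  simp [frob_pow_apply, mul_pow]

/-- By `frob_comp_carlitzMap`, the operator `precomp ρ - b^(q^i)` sends `τ^i` to `τ^(i+1)`; the
product of the first `m` of them therefore sends `1` to `τ^m`. -/
theorem aeval_precomp_prod {B : Type*} [CommRing B] [Algebra Fq B] (b : B) (m : ℕ) :
    aeval (precomp (carlitzMap Fq b)) (∏ i ∈ Finset.range m, (X - C (b ^ Fintype.card Fq ^ i))) 1 =
      (FiniteField.frobeniusAlgHom Fq B).toLinearMap ^ m := by
  induction m with
  | zero => simp
  | succ m ih =>
    rw [Finset.prod_range_succ, mul_comm, map_mul, Module.End.mul_apply, ih]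
    have := frob_comp_carlitzMap (Fq := Fq) b m
    simp only [map_sub, aeval_X, aeval_C, LinearMap.sub_apply, Module.algebraMap_end_apply]
    rw [sub_eq_iff_eq_add]
    exact this

/-- The powers of `b`'s Carlitz map span, with coefficients in `B`, the powers of Frobenius up to
the same exponent: `τ^(i+1) = τ^i ρ - b^(q^i) τ^i`. -/
theorem frob_mem_span {B : Type*} [CommRing B] [Algebra Fq B] (b : B) (i : ℕ) :
    (FiniteField.frobeniusAlgHom Fq B).toLinearMap ^ i ∈
      Submodule.span B ((fun j => carlitzMap Fq b ^ j) '' Set.Iic i) := by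
  induction i with
  | zero => exact Submodule.subset_span ⟨0, by simp, by simp⟩
  | succ i ih =>
    rw [← sub_eq_iff_eq_add.2 (frob_comp_carlitzMap b i)]
    refine sub_mem ?_ (Submodule.smul_mem _ _ (Submodule.span_mono
      (Set.image_mono (Set.Iic_subset_Iic.2 i.le_succ)) ih))
    have := Submodule.mem_map_of_mem (f := precomp (carlitzMap Fq b)) ih
    rw [Submodule.map_span] at this
    refine Submodule.span_mono ?_ this
    rintro _ ⟨_, ⟨j, hj, rfl⟩, rfl⟩
    exact ⟨j + 1, by simpa using hj, pow_succ _ _⟩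

section Field
variable {K : Type*} [Field K] [Algebra Fq K] [Module.Finite Fq K] {g : Fq[X]} {θ : K}

/-- The Frobenius conjugates of a generator `θ` are the roots of its monic minimal polynomial `g`.
The hypothesis `hext` expresses that `θ` generates `K`. -/
theorem map_eq_prod (hm : g.Monic) (hfin : Module.finrank Fq K = g.natDegree)
    (hθ : aeval θ g = 0) (hext : ∀ φ ψ : K →ₐ[Fq] K, φ θ = ψ θ → φ = ψ) :
    g.map (algebraMap Fq K) = ∏ i ∈ Finset.range g.natDegree, (X - C (θ ^ Fintype.card Fq ^ i)) := by
  have : Finite K := Module.finite_of_finite Fq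
  have hprod : (∏ i ∈ Finset.range g.natDegree,
      (X - C (θ ^ Fintype.card Fq ^ i))).Monic :=
    monic_prod_of_monic _ _ fun i _ => monic_X_sub_C _
  have hfr : ∀ i, ∀ x : K,
      (FiniteField.frobeniusAlgHom Fq K ^ i) x = x ^ Fintype.card Fq ^ i := by
    intro i x
    rw [← frob_pow_apply (Fq := Fq), ← frob_pow_toLinearMap]
    rfl
  refine (eq_of_monic_of_dvd_of_natDegree_le hprod (hm.map _) ?_ ?_)
  · refine Finset.prod_dvd_of_coprime ?_ ?_
    · intro i hi j hj hij
      refine isCoprime_X_sub_C_of_isUnit_sub (sub_ne_zero_of_ne fun h => hij ?_).isUnit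
      have hinj := (FiniteField.bijective_frobeniusAlgHom_pow Fq K).1
      have hi' : i < Module.finrank Fq K := by
        rw [hfin]; simpa using hi
      have hj' : j < Module.finrank Fq K := by
        rw [hfin]; simpa using hj
      have := @hinj ⟨i, hi'⟩ ⟨j, hj'⟩ (hext _ _ (by simpa only [hfr] using h))
      simpa using this
    · intro i _
      rw [dvd_iff_isRoot, IsRoot, eval_map_algebraMap, ← hfr, aeval_algHom_apply, hθ, map_zero]
  · rw [natDegree_map, natDegree_prod_of_monic _ _ fun i _ => monic_X_sub_C _]
    simp only [natDegree_X_sub_C, Finset.sum_const, Finset.card_range, smul_eq_mul, mul_one, le_refl]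

/-- For a finite extension `K = Fq(θ)` with `g` the monic minimal polynomial of `θ`, the polynomial
`g - 1` is both the minimal and the characteristic polynomial of the Carlitz map of `θ`. -/
theorem charpoly_carlitzMap_field (hm : g.Monic) (hpos : 0 < g.natDegree)
    (hfin : Module.finrank Fq K = g.natDegree)
    (hθ : aeval θ g = 0) (hext : ∀ φ ψ : K →ₐ[Fq] K, φ θ = ψ θ → φ = ψ) :
    (carlitzMap Fq θ).charpoly = g - 1 := by
  have : Finite K := Module.finite_of_finite Fq
  have hdeg : (1 : Fq[X]).degree < g.degree := by
    rw [degree_one]; exact natDegree_pos_iff_degree_pos.1 hpos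
  have hm1 : (g - 1).Monic := hm.sub_of_left hdeg
  have hd1 : (g - 1).natDegree = g.natDegree := by
    rw [← C_1, natDegree_sub_C]
  have hkill : aeval (carlitzMap Fq θ) (g - 1) = 0 := by
    rw [map_sub, map_one, ← aeval_precomp, map_eq_prod hm hfin hθ hext,
      aeval_precomp_prod, sub_eq_zero]
    have h := pow_orderOf_eq_one (FiniteField.frobeniusAlgHom Fq K)
    rw [FiniteField.orderOf_frobeniusAlgHom, hfin] at h
    rw [← frob_pow_toLinearMap, h]
    rfl
  -- Dedekind: the powers of Frobenius are independent over `K`.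
  have hfrob := (linearIndependent_algHom_toLinearMap Fq K K).comp _
    (FiniteField.bijective_frobeniusAlgHom_pow Fq K).1
  have hli : LinearIndependent K
      (fun i : Fin g.natDegree => carlitzMap Fq θ ^ (i : ℕ)) := by
    rw [linearIndependent_iff_card_le_finrank_span, Fintype.card_fin]
    set W := Submodule.span K (Set.range
      (fun i : Fin g.natDegree => carlitzMap Fq θ ^ (i : ℕ))) with hW
    have hmem : Submodule.span K (Set.range (AlgHom.toLinearMap ∘
        fun i : Fin (Module.finrank Fq K) => FiniteField.frobeniusAlgHom Fq K ^ (i : ℕ))) ≤ W := by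
      refine Submodule.span_le.2 (Set.range_subset_iff.2 fun i => ?_)
      rw [Function.comp_apply, frob_pow_toLinearMap]
      refine Submodule.span_mono ?_ (frob_mem_span θ (i : ℕ))
      rintro _ ⟨j, hj, rfl⟩
      exact ⟨⟨j, lt_of_le_of_lt hj (i.2.trans_eq hfin)⟩, rfl⟩
    have h1 := finrank_span_eq_card hfrob
    rw [Set.finrank, ← hW]
    exact (hfin.symm.trans ((Fintype.card_fin _).symm.trans h1.symm)).trans_le
      (Submodule.finrank_mono hmem)
  have hmin : minpoly Fq (carlitzMap Fq θ) = g - 1 :=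
    minpoly.eq_of_linearIndependent _ _ hm1 hkill _
      (by rw [degree_eq_natDegree hm1.ne_zero, hd1]) (hli.restrict_scalars' Fq)
  refine eq_of_monic_of_dvd_of_natDegree_le hm1 (LinearMap.charpoly_monic _) ?_ ?_
  · rw [← hmin]; exact LinearMap.minpoly_dvd_charpoly _
  · rw [LinearMap.charpoly_natDegree, hfin, hd1]

end Field

theorem charpoly_carlitzMap_root {g : Fq[X]} (hg : Irreducible g) (hm : g.Monic)
    [Module.Finite Fq (AdjoinRoot g)] :
    (carlitzMap Fq (AdjoinRoot.root g)).charpoly = g - 1 := by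
  have : Fact (Irreducible g) := ⟨hg⟩
  exact charpoly_carlitzMap_field hm hg.natDegree_pos finrank_quotient_span_eq_natDegree
    (by rw [AdjoinRoot.aeval_eq, AdjoinRoot.mk_self]) fun _ _ h => AdjoinRoot.algHom_ext h

theorem charpoly_carlitzMap_root_prod (S : Finset Fq[X])
    (hmonic : ∀ g ∈ S, g.Monic) (hirr : ∀ g ∈ S, Irreducible g)
    (f : Fq[X]) (hf : f = ∏ g ∈ S, g) [Module.Finite Fq (AdjoinRoot f)] :
    (carlitzMap Fq (AdjoinRoot.root f)).charpoly = ∏ g ∈ S, (g - 1) := by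
  classical
  induction S using Finset.induction_on generalizing f with
  | empty =>
    rw [Finset.prod_empty]
    refine (LinearMap.charpoly_monic _).natDegree_eq_zero.1 ?_
    rw [LinearMap.charpoly_natDegree]
    refine finrank_quotient_span_eq_natDegree.trans ?_
    rw [hf, Finset.prod_empty, natDegree_one]
  | insert a S ha ih =>
    rw [Finset.prod_insert ha] at hf ⊢
    subst hf
    have hmS : ∀ g ∈ S, g.Monic := fun g hg => hmonic g (Finset.mem_insert_of_mem hg)
    have hiS : ∀ g ∈ S, Irreducible g := fun g hg => hirr g (Finset.mem_insert_of_mem hg)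
    have hma := hmonic a (Finset.mem_insert_self a S)
    have hia := hirr a (Finset.mem_insert_self a S)
    have hmp : (∏ g ∈ S, g).Monic := monic_prod_of_monic _ _ hmS
    have := hma.finite_adjoinRoot
    have := hmp.finite_adjoinRoot
    rw [charpoly_carlitzMap_root_mul hma hmp, ih hmS hiS _ rfl,
      charpoly_carlitzMap_root hia hma]
    refine IsCoprime.prod_right fun g hg => ?_
    refine (hia.coprime_iff_not_dvd).2 fun hdvd => ?_
    have := eq_of_monic_of_associated hma (hmS g hg) (hia.associated_of_dvd (hiS g hg) hdvd)
    exact ha (this ▸ hg)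

end Carlitz

/-- The leading-term estimate for `∏ g - ∏ (g - 1)`. The factor `X ^ d` replaces a statement about
degree `∑ deg g - d`, whose truncated subtraction would break the induction at empty `S`. -/
theorem prod_sub_prod_sub_one {K : Type*} [Field K] (S : Finset K[X]) (d : ℕ)
    (hd : 1 ≤ d) (hmonic : ∀ g ∈ S, g.Monic) (hdle : ∀ g ∈ S, d ≤ g.natDegree) :
    (X ^ d * (∏ g ∈ S, g - ∏ g ∈ S, (g - 1))).natDegree ≤ ∑ g ∈ S, g.natDegree ∧
    (X ^ d * (∏ g ∈ S, g - ∏ g ∈ S, (g - 1))).coeff (∑ g ∈ S, g.natDegree) =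
      ((S.filter (fun g => g.natDegree = d)).card : K) := by
  classical
  induction S using Finset.induction_on with
  | empty => simp
  | insert a S ha ih =>
    have hmS : ∀ g ∈ S, g.Monic := fun g hg => hmonic g (Finset.mem_insert_of_mem hg)
    have hdS : ∀ g ∈ S, d ≤ g.natDegree := fun g hg => hdle g (Finset.mem_insert_of_mem hg)
    have hma := hmonic a (Finset.mem_insert_self a S)
    have hda := hdle a (Finset.mem_insert_self a S)
    obtain ⟨ih1, ih2⟩ := ih hmS hdS
    have hm1 : ∀ g ∈ S, (g - 1).Monic := fun g hg => (hmS g hg).sub_of_left (by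
      rw [degree_one]; exact natDegree_pos_iff_degree_pos.1 (by have := hdS g hg; omega))
    have hQm : (X ^ d * ∏ g ∈ S, (g - 1)).Monic :=
      (monic_X_pow d).mul (monic_prod_of_monic _ _ hm1)
    have hQd : (X ^ d * ∏ g ∈ S, (g - 1)).natDegree = d + ∑ g ∈ S, g.natDegree := by
      rw [(monic_X_pow d).natDegree_mul (monic_prod_of_monic _ _ hm1), natDegree_X_pow,
        natDegree_prod_of_monic _ _ hm1]
      congr 1
      refine Finset.sum_congr rfl fun g _ => ?_
      rw [← C_1, natDegree_sub_C]
    have key : X ^ d * (∏ g ∈ insert a S, g - ∏ g ∈ insert a S, (g - 1)) =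
        a * (X ^ d * (∏ g ∈ S, g - ∏ g ∈ S, (g - 1))) + X ^ d * ∏ g ∈ S, (g - 1) := by
      rw [Finset.prod_insert ha, Finset.prod_insert ha]; ring
    rw [key, Finset.sum_insert ha]
    constructor
    · refine (natDegree_add_le _ _).trans (max_le ?_ ?_)
      · exact natDegree_mul_le_of_le le_rfl ih1
      · rw [hQd]; omega
    · rw [coeff_add, coeff_mul_add_eq_of_natDegree_le le_rfl ih1, hma.coeff_natDegree, ih2, one_mul,
        Finset.filter_insert]
      split_ifs with h
      · rw [Finset.card_insert_of_notMem (by simp [ha]), h, ← hQd, hQm.coeff_natDegree]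
        push_cast; rfl
      · rw [coeff_eq_zero_of_natDegree_lt (by rw [hQd]; omega), add_zero]

/-- Let `f ∈ F_q[x]` be monic squarefree of degree `n ≥ 1` with distinct monic irreducible
factors the elements of `S`, let `d` be the smallest degree among the factors, and suppose
the characteristic `p` does not divide the number of factors of degree `d`. If `χ_f` is the
characteristic polynomial of the Carlitz map `α ↦ α^q + x·α` on `F_q[x]/(f)`, then
`deg (f − χ_f) = n − d`. -/
theorem carlitz_charpoly_min_factor_degree
    (Fq : Type*) [Field Fq] [Fintype Fq] [DecidableEq Fq] (p : ℕ) [CharP Fq p]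
    (f : Polynomial Fq) (S : Finset (Polynomial Fq))
    (hmonic : ∀ g ∈ S, g.Monic) (hirr : ∀ g ∈ S, Irreducible g)
    (hf : f = ∏ g ∈ S, g) (hn : 1 ≤ f.natDegree)
    (d : ℕ) (hdle : ∀ g ∈ S, d ≤ g.natDegree) (hdmem : ∃ g ∈ S, g.natDegree = d)
    (hp : ¬ p ∣ (S.filter (fun g => g.natDegree = d)).card)
    [Module.Finite Fq (AdjoinRoot f)]
    (ρ : Module.End Fq (AdjoinRoot f))
    (hρ : ∀ α : AdjoinRoot f, ρ α = α ^ Fintype.card Fq + AdjoinRoot.root f * α) :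
    (f - LinearMap.charpoly ρ).natDegree = f.natDegree - d := by
  obtain rfl : ρ = carlitzMap Fq (AdjoinRoot.root f) := LinearMap.ext hρ
  subst hf
  rw [charpoly_carlitzMap_root_prod S hmonic hirr _ rfl, natDegree_prod_of_monic _ _ hmonic]
  obtain ⟨g, hgS, hgd⟩ := hdmem
  have hd : 1 ≤ d := hgd ▸ (hirr g hgS).natDegree_pos
  obtain ⟨h1, h2⟩ := prod_sub_prod_sub_one S d hd hmonic hdle
  have hc : ((S.filter (fun g => g.natDegree = d)).card : Fq) ≠ 0 := by
    rwa [Ne, CharP.cast_eq_zero_iff Fq p]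
  have h3 := le_antisymm h1 (le_natDegree_of_ne_zero (h2.trans_ne hc))
  have hne : ∏ g ∈ S, g - ∏ g ∈ S, (g - 1) ≠ 0 := by
    intro h
    rw [h] at h2
    exact hc (by simpa using h2.symm)
  -- `h3` reads `deg (X ^ d * (f - χ)) = n`.
  rw [(monic_X_pow d).natDegree_mul' hne, natDegree_X_pow] at h3
  omega
end

section
/- Let f be a monic squarefree polynomial of degree n over the finite field F_q and let m be a positive integer with m ≤ n. Then f divides ∏_{0 ≤ i < j ≤ m} (x^{q^{j−i}} − x)^{q^i} if and only if every monic irreducible factor of f has degree at most m. Equivalently, the Moore determinant Δ(1, x, …, x^m) is zero modulo f if and only if every irreducible factor of f has degree at most m. -/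
open Polynomial

/-!
Over `F_q`, an irreducible `g` divides `x^{q^d} - x` exactly when `deg g` divides `d`
(`Irreducible.natDegree_dvd_iff_dvd_X_pow_card_pow_sub_X`). In the product the differences
`j - i` take exactly the values `1, …, m`, so an irreducible (hence prime) `g` divides the product
if and only if `deg g` divides some `d` with `1 ≤ d ≤ m`, that is, if and only if `deg g ≤ m`.
Finally, a squarefree `f` divides a polynomial as soon as each of its irreducible factors does.
-/

/-- An irreducible `g` divides the product form of the Moore determinant `Δ(1, x, …, x^m)`
if and only if `deg g ≤ m`. -/
lemma irreducible_dvd_moore_prod_iff (Fq : Type*) [Field Fq] [Fintype Fq]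
    (m : ℕ) (g : Polynomial Fq) (hg : Irreducible g) :
    (g ∣ ∏ j ∈ Finset.range (m + 1), ∏ i ∈ Finset.range j,
        ((X : Polynomial Fq) ^ Fintype.card Fq ^ (j - i) - X) ^ Fintype.card Fq ^ i)
      ↔ g.natDegree ≤ m := by
  have key : ∀ d : ℕ, g.natDegree ∣ d ↔ g ∣ X ^ Fintype.card Fq ^ d - X := fun d => by
    rw [← Nat.card_eq_fintype_card]
    exact hg.natDegree_dvd_iff_dvd_X_pow_card_pow_sub_X
  constructor
  · intro h
    obtain ⟨j, hj, h⟩ := hg.prime.exists_mem_finset_dvd h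
    obtain ⟨i, hi, h⟩ := hg.prime.exists_mem_finset_dvd h
    rw [Finset.mem_range] at hi hj
    have := Nat.le_of_dvd (by lia) ((key (j - i)).2 (hg.prime.dvd_of_dvd_pow h))
    lia
  · intro h
    have hpos : 0 < g.natDegree := hg.natDegree_pos
    -- The factor with `j = deg g` and `i = 0` is `x^{q^{deg g}} - x`.
    refine dvd_trans ?_ (Finset.dvd_prod_of_mem _ (Finset.mem_range.2 (Nat.lt_succ_of_le h)))
    refine dvd_trans ?_ (Finset.dvd_prod_of_mem _ (Finset.mem_range.2 hpos))
    simpa using (key g.natDegree).1 dvd_rfl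

/-- For a monic squarefree `f ∈ F_q[x]` of degree `n` and a positive integer `m ≤ n`,
`f` divides `∏_{0 ≤ i < j ≤ m} (x^{q^{j−i}} − x)^{q^i}` (i.e. the Moore determinant
`Δ(1, x, …, x^m)` vanishes mod `f`) if and only if every monic irreducible factor of `f`
has degree at most `m`. -/
theorem moore_det_zero_iff_factor_degrees_le
    (Fq : Type*) [Field Fq] [Fintype Fq]
    (f : Polynomial Fq) (hmonic : f.Monic) (hsf : Squarefree f)
    (m : ℕ) (hm : 0 < m) (hmn : m ≤ f.natDegree) :
    (f ∣ ∏ j ∈ Finset.range (m + 1), ∏ i ∈ Finset.range j,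
        ((X : Polynomial Fq) ^ Fintype.card Fq ^ (j - i) - X) ^ Fintype.card Fq ^ i)
      ↔ ∀ g : Polynomial Fq, g.Monic → Irreducible g → g ∣ f → g.natDegree ≤ m := by
  classical
  constructor
  · intro h g _ hg hgf
    exact (irreducible_dvd_moore_prod_iff Fq m g hg).1 (hgf.trans h)
  · intro h
    have hf0 : f ≠ 0 := hmonic.ne_zero
    set P : Polynomial Fq := ∏ j ∈ Finset.range (m + 1), ∏ i ∈ Finset.range j,
        ((X : Polynomial Fq) ^ Fintype.card Fq ^ (j - i) - X) ^ Fintype.card Fq ^ i with hP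
    rcases eq_or_ne P 0 with hP0 | hP0
    · exact hP0 ▸ dvd_zero f
    open UniqueFactorizationMonoid in
    rw [dvd_iff_normalizedFactors_le_normalizedFactors hf0 hP0,
      Multiset.le_iff_subset ((squarefree_iff_nodup_normalizedFactors hf0).1 hsf)]
    intro g hgf
    rw [Polynomial.mem_normalizedFactors_iff hf0] at hgf
    obtain ⟨hg, hgm, hgf⟩ := hgf
    rw [Polynomial.mem_normalizedFactors_iff hP0]
    exact ⟨hg, hgm, (irreducible_dvd_moore_prod_iff Fq m g hg).2 (h g hgm hg hgf)⟩
end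

section
/- Let b be a positive integer and let S = {0, 1, …, b−1} ∪ {b, 2b, 3b, …, (b−1)b, b²} ⊆ ℕ. Then S has exactly 2b elements, and the set of positive differences {j − i : i, j ∈ S, i < j} equals {1, 2, …, b²}. -/
/-! The small elements `0, …, b - 1` are all below `b` and the multiples `b, 2b, …, b²` are not, so
the two parts of `S` are disjoint with `b` elements each. Since `S ⊆ [0, b²]`, positive differences
lie in `[1, b²]`; conversely, rounding `d` up to a multiple of `b` writes it as `q * b - r` with
`1 ≤ q ≤ b` and `r < b`, a difference of a multiple and a small element. -/

/-- For a positive integer `b`, the set `S = {0, 1, …, b−1} ∪ {b, 2b, …, (b−1)b, b²}`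
has exactly `2b` elements, and its set of positive differences is `{1, 2, …, b²}`. -/
theorem baby_giant_difference_set (b : ℕ) (hb : 0 < b)
    (S : Finset ℕ)
    (hS : S = Finset.range b ∪ (Finset.Icc 1 b).image (fun i => i * b)) :
    S.card = 2 * b ∧
      ((S ×ˢ S).filter (fun p => p.1 < p.2)).image (fun p => p.2 - p.1)
        = Finset.Icc 1 (b ^ 2) := by
  have hmem (x : ℕ) : x ∈ S ↔ x < b ∨ ∃ i, (1 ≤ i ∧ i ≤ b) ∧ i * b = x := by
    simp [hS]
  constructor
  · rw [hS, Finset.card_union_of_disjoint, Finset.card_image_of_injective]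
    · simp [two_mul]
    · exact fun x y h => Nat.eq_of_mul_eq_mul_right hb h
    · rw [Finset.disjoint_left]
      intro x hx hx'
      obtain ⟨i, hi, rfl⟩ := Finset.mem_image.mp hx'
      exact (Finset.mem_range.mp hx).not_ge
        (Nat.le_mul_of_pos_left b (Finset.mem_Icc.mp hi).1)
  · ext d
    simp only [Finset.mem_image, Finset.mem_filter, Finset.mem_product, Finset.mem_Icc,
      Prod.exists]
    constructor
    · rintro ⟨i, j, ⟨⟨-, hj⟩, hij⟩, rfl⟩
      have hjb : j ≤ b ^ 2 := by
        rcases (hmem j).mp hj with h | ⟨k, ⟨-, hk⟩, rfl⟩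
        · nlinarith
        · nlinarith
      omega
    · rintro ⟨hd1, hd2⟩
      -- `d = b * q + s + 1` with `s < b`, so the next multiple of `b` is `(q + 1) * b`.
      obtain ⟨q, s, hs, hd⟩ : ∃ q s, s < b ∧ b * q + s + 1 = d :=
        ⟨(d - 1) / b, (d - 1) % b, Nat.mod_lt _ hb, by
          have := Nat.div_add_mod (d - 1) b
          omega⟩
      have hq : q < b := by
        by_contra! h
        nlinarith
      have hmul : (q + 1) * b = b * q + b := by ring
      refine ⟨b - 1 - s, (q + 1) * b, ⟨⟨(hmem _).mpr (Or.inl (by omega)),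
        (hmem _).mpr (Or.inr ⟨q + 1, ⟨by omega, by omega⟩, rfl⟩)⟩, ?_⟩, ?_⟩ <;> omega
end

section
/- Let f be a monic squarefree polynomial over the finite field F_q, let b be a positive integer, and let S = {0, 1, …, b−1} ∪ {b, 2b, …, (b−1)b, b²}. Let V ∈ F_q[x] be the Vandermonde determinant ∏_{i, j ∈ S, i < j} (x^{q^j} − x^{q^i}). Then gcd(V, f) = gcd(∏_{d=1}^{b²} (x^{q^d} − x), f). -/
/-!
Every factor of `V` is a power of a polynomial `X ^ q ^ d - X`: as the `q`-Frobenius is additive,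
`X ^ q ^ j - X ^ q ^ i = (X ^ q ^ (j - i) - X) ^ q ^ i`
(`X_pow_card_pow_sub_eq_pow`). The positive differences `j - i` of elements of `S` are exactly
`1, …, b ^ 2`: they are at most `max S = b ^ 2`, and conversely every such `d` is
`k * b - r` with `1 ≤ k ≤ b` and `0 ≤ r < b` (baby-step giant-step). Hence `V` and
`∏ d, (X ^ q ^ d - X)` each divide a power of the other, and such polynomials have the same gcd
with a squarefree `f`, since divisors of `f` are radical (`gcd_dvd_gcd_of_dvd_pow`).
-/

open Polynomial

theorem X_pow_card_pow_sub_eq_pow (Fq : Type*) [Field Fq] [Fintype Fq] {i j : ℕ} (h : i ≤ j) :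
    (X : Polynomial Fq) ^ Fintype.card Fq ^ j - X ^ Fintype.card Fq ^ i
      = (X ^ Fintype.card Fq ^ (j - i) - X) ^ Fintype.card Fq ^ i := by
  obtain ⟨p, _⟩ := CharP.exists Fq
  obtain ⟨n, hp, hn⟩ := FiniteField.card Fq p
  have : Fact p.Prime := ⟨hp⟩
  obtain ⟨k, rfl⟩ := Nat.exists_eq_add_of_le h
  rw [Nat.add_sub_cancel_left, hn, ← pow_mul p n i, sub_pow_char_pow, ← pow_mul, ← pow_mul,
    ← pow_mul, ← pow_add]
  congr 3
  ring

/-- Divisors of a squarefree `f` are radical, so only the prime factors of `a`, not their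
multiplicities, matter for `gcd a f`. -/
theorem gcd_dvd_gcd_of_dvd_pow {R : Type*} [CommRing R] [IsDomain R] [GCDMonoid R]
    {a c f : R} (hf : Squarefree f) {n : ℕ} (h : a ∣ c ^ n) : gcd a f ∣ gcd c f :=
  dvd_gcd
    ((hf.squarefree_of_dvd (gcd_dvd_right a f)).isRadical n c ((gcd_dvd_left a f).trans h))
    (gcd_dvd_right a f)

theorem le_sq_of_mem_steps {b j : ℕ} (hb : 0 < b)
    (hj : j ∈ Finset.range b ∪ (Finset.Icc 1 b).image (fun i => i * b)) : j ≤ b ^ 2 := by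
  simp only [Finset.mem_union, Finset.mem_range, Finset.mem_image, Finset.mem_Icc] at hj
  rcases hj with hj | ⟨k, ⟨_, hk⟩, rfl⟩
  · nlinarith
  · nlinarith

/-- Baby-step giant-step: every `d` in `[1, b ^ 2]` is a difference of two exponents. -/
theorem exists_mem_steps_sub_eq {b d : ℕ} (hb : 0 < b) (hd1 : 1 ≤ d) (hd : d ≤ b ^ 2) :
    ∃ i ∈ Finset.range b ∪ (Finset.Icc 1 b).image (fun i => i * b),
      i + d ∈ Finset.range b ∪ (Finset.Icc 1 b).image (fun i => i * b) := by
  -- The giant step is `k = ⌈d / b⌉ = (d - 1) / b + 1`, the baby step is `k * b - d`.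
  have h1 := Nat.div_add_mod (d - 1) b
  have h2 := Nat.mod_lt (d - 1) hb
  have h3 : (d - 1) / b < b := by
    rw [Nat.div_lt_iff_lt_mul hb]
    have := pow_two b
    omega
  refine ⟨b - 1 - (d - 1) % b, ?_, ?_⟩
  · simp only [Finset.mem_union, Finset.mem_range]
    left; omega
  · simp only [Finset.mem_union, Finset.mem_image, Finset.mem_Icc]
    refine Or.inr ⟨(d - 1) / b + 1, ⟨Nat.le_add_left 1 _, h3⟩, ?_⟩
    rw [add_mul, one_mul, mul_comm]
    omega

/-- Let `f ∈ F_q[x]` be monic squarefree, `b` a positive integer, and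
`S = {0, 1, …, b−1} ∪ {b, 2b, …, (b−1)b, b²}`. If `V` is the Vandermonde determinant
`∏_{i<j ∈ S} (x^{q^j} − x^{q^i})`, then `gcd(V, f) = gcd(∏_{d=1}^{b²} (x^{q^d} − x), f)`. -/
theorem vandermonde_gcd_eq
    (Fq : Type*) [Field Fq] [Fintype Fq] [DecidableEq Fq]
    (f : Polynomial Fq) (hmonic : f.Monic) (hsf : Squarefree f)
    (b : ℕ) (hb : 0 < b)
    (S : Finset ℕ)
    (hS : S = Finset.range b ∪ (Finset.Icc 1 b).image (fun i => i * b))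
    (V : Polynomial Fq)
    (hV : V = ∏ p ∈ (S ×ˢ S).filter (fun p => p.1 < p.2),
        ((X : Polynomial Fq) ^ Fintype.card Fq ^ p.2 - X ^ Fintype.card Fq ^ p.1)) :
    gcd V f
      = gcd (∏ d ∈ Finset.Icc 1 (b ^ 2),
          ((X : Polynomial Fq) ^ Fintype.card Fq ^ d - X)) f := by
  have hVB : V ∣ (∏ d ∈ Finset.Icc 1 (b ^ 2),
      ((X : Polynomial Fq) ^ Fintype.card Fq ^ d - X)) ^
        ∑ p ∈ (S ×ˢ S).filter (fun p => p.1 < p.2), Fintype.card Fq ^ p.1 := by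
    rw [hV, ← Finset.prod_pow_eq_pow_sum]
    refine Finset.prod_dvd_prod_of_dvd _ _ fun p hp => ?_
    simp only [Finset.mem_filter, Finset.mem_product] at hp
    obtain ⟨⟨-, h2⟩, hlt⟩ := hp
    rw [X_pow_card_pow_sub_eq_pow Fq hlt.le]
    have hle := le_sq_of_mem_steps hb (hS ▸ h2)
    exact pow_dvd_pow_of_dvd (Finset.dvd_prod_of_mem
      (fun d => (X : Polynomial Fq) ^ Fintype.card Fq ^ d - X)
      (Finset.mem_Icc.2 ⟨by omega, by omega⟩)) _
  have hBV : (∏ d ∈ Finset.Icc 1 (b ^ 2), ((X : Polynomial Fq) ^ Fintype.card Fq ^ d - X)) ∣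
      V ^ (Finset.Icc 1 (b ^ 2)).card := by
    rw [← Finset.prod_const]
    refine Finset.prod_dvd_prod_of_dvd _ _ fun d hd => ?_
    obtain ⟨hd1, hd2⟩ := Finset.mem_Icc.1 hd
    obtain ⟨i, hi, hj⟩ := exists_mem_steps_sub_eq hb hd1 hd2
    rw [← hS] at hi hj
    have hdvd : (X : Polynomial Fq) ^ Fintype.card Fq ^ d - X ∣
        X ^ Fintype.card Fq ^ (i + d) - X ^ Fintype.card Fq ^ i := by
      rw [X_pow_card_pow_sub_eq_pow Fq (Nat.le_add_right i d), Nat.add_sub_cancel_left]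
      exact dvd_pow_self _ (pow_ne_zero _ Fintype.card_ne_zero)
    rw [hV]
    refine hdvd.trans (Finset.dvd_prod_of_mem (fun p : ℕ × ℕ =>
      (X : Polynomial Fq) ^ Fintype.card Fq ^ p.2 - X ^ Fintype.card Fq ^ p.1)
      (a := (i, i + d)) ?_)
    simp only [Finset.mem_filter, Finset.mem_product]
    exact ⟨⟨hi, hj⟩, by omega⟩
  exact dvd_antisymm_of_normalize_eq (normalize_gcd _ _) (normalize_gcd _ _)
    (gcd_dvd_gcd_of_dvd_pow hsf hVB) (gcd_dvd_gcd_of_dvd_pow hsf hBV)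
end
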